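/- arXiv:1601.05682 — 5 statements merged into one kernel-verified Lean document; each statement's English description precedes it below -/
import Mathlib

section
/- For every real number λ > 0 and every a ∈ (0,2), the improper integrals ∫₀^∞ sin(λx)/x^a dx and ∫₀^∞ sin²(λx)/x^{a+1} dx converge and satisfy (2/λ^{a−1}) · ∫₀^∞ sin(λx)/x^a dx = (4a/(2^a λ^a)) · ∫₀^∞ sin²(λx)/x^{a+1} dx = π / (Γ(a) · sin(aπ/2)). -/
/-!
The integral of `sin² (λx) / x ^ (a + 1)` has a nonnegative integrand, so it can be computed by
Tonelli's theorem. Writing `Γ(a + 1) / x ^ (a + 1) = ∫ t ^ a * exp (-t x) dt` and using the Laplace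
transform `∫ exp (-t x) sin² (λx) dx = 2λ² / (t (t² + 4λ²))` (`hasInt_exp_mul_sin_sq`), it reduces
to `∫ t ^ (a - 1) / (t² + 4λ²) dt`. A second application of Tonelli, with
`1 / (t² + 4λ²) = ∫ exp (-v (t² + 4λ²)) dv`, turns the latter into
`Γ(a/2) Γ(1 - a/2)` times elementary factors (`hasInt_rpow_div`), and the reflection formula gives
`∫ sin² (λx) / x ^ (a + 1) dx = (2λ) ^ a / 4 * π / (Γ(a + 1) sin (πa/2))` (`hasInt_sin_sq`).

The conditionally convergent integral is obtained from this one by integrating by parts: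
`sin² (μx) / x ^ a` vanishes at `0` and at infinity, and its derivative is
`μ sin (2μx) / x ^ a - a sin² (μx) / x ^ (a + 1)`; take `μ = λ/2`.
-/

open MeasureTheory Filter Set

/-- `f` is integrable on `(0, ∞)`, with integral `c`. -/
def HasInt (f : ℝ → ℝ) (c : ℝ) : Prop :=
  IntegrableOn f (Ioi 0) ∧ ∫ x in Ioi (0 : ℝ), f x = c

lemma HasInt.congr {f g : ℝ → ℝ} {c : ℝ} (h : HasInt f c) (hfg : ∀ x > 0, f x = g x) :
    HasInt g c :=
  ⟨h.1.congr_fun (fun x hx => hfg x hx) measurableSet_Ioi,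
    (setIntegral_congr_fun measurableSet_Ioi (fun x hx => (hfg x hx).symm)).trans h.2⟩

lemma HasInt.const_mul {f : ℝ → ℝ} {c : ℝ} (h : HasInt f c) (k : ℝ) :
    HasInt (fun x => k * f x) (k * c) :=
  ⟨h.1.const_mul k, by rw [integral_const_mul, h.2]⟩

lemma HasInt.of_ne_zero {f : ℝ → ℝ} {c : ℝ} (h : ∫ x in Ioi (0 : ℝ), f x = c) (hc : c ≠ 0) :
    HasInt f c :=
  ⟨Integrable.of_integral_ne_zero (by rwa [h]), h⟩

lemma HasInt.lintegral {f : ℝ → ℝ} {c : ℝ} (h : HasInt f c) (hf : ∀ x > 0, 0 ≤ f x) :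
    ∫⁻ x in Ioi (0 : ℝ), ENNReal.ofReal (f x) = ENNReal.ofReal c := by
  rw [← h.2, ofReal_integral_eq_lintegral_ofReal h.1]
  filter_upwards [ae_restrict_mem measurableSet_Ioi] with x hx using hf x hx

/-- Tonelli's theorem on `(0, ∞)²`: for a nonnegative kernel `f` with marginals `g` and `h`, the
integral of `h` is also the integral of `g`. -/
lemma HasInt.swap {f : ℝ → ℝ → ℝ} {g h : ℝ → ℝ} {c : ℝ}
    (hf : Measurable (Function.uncurry f)) (hf0 : ∀ x > 0, ∀ y > 0, 0 ≤ f x y)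
    (hgm : Measurable g) (hg : ∀ x > 0, HasInt (f x) (g x))
    (hh : ∀ y > 0, HasInt (fun x => f x y) (h y)) (H : HasInt h c) : HasInt g c := by
  have hg0 : ∀ x > 0, 0 ≤ g x := fun x hx => by
    rw [← (hg x hx).2]
    exact setIntegral_nonneg measurableSet_Ioi (fun y hy => hf0 x hx y hy)
  have hh0 : ∀ y > 0, 0 ≤ h y := fun y hy => by
    rw [← (hh y hy).2]
    exact setIntegral_nonneg measurableSet_Ioi (fun x hx => hf0 x hx y hy)
  have hc : 0 ≤ c := by
    rw [← H.2]
    exact setIntegral_nonneg measurableSet_Ioi hh0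
  have key : ∫⁻ x in Ioi (0 : ℝ), ENNReal.ofReal (g x) = ENNReal.ofReal c := by
    calc ∫⁻ x in Ioi (0 : ℝ), ENNReal.ofReal (g x)
        = ∫⁻ x in Ioi (0 : ℝ), ∫⁻ y in Ioi (0 : ℝ), ENNReal.ofReal (f x y) :=
          setLIntegral_congr_fun measurableSet_Ioi
            (fun x hx => ((hg x hx).lintegral (hf0 x hx)).symm)
      _ = ∫⁻ y in Ioi (0 : ℝ), ∫⁻ x in Ioi (0 : ℝ), ENNReal.ofReal (f x y) :=
          lintegral_lintegral_swap (by
            exact (ENNReal.measurable_ofReal.comp hf).aemeasurable)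
      _ = ∫⁻ y in Ioi (0 : ℝ), ENNReal.ofReal (h y) :=
          setLIntegral_congr_fun measurableSet_Ioi
            (fun y hy => (hh y hy).lintegral (fun x hx => hf0 x hx y hy))
      _ = ENNReal.ofReal c := H.lintegral hh0
  have hg0' : 0 ≤ᵐ[volume.restrict (Ioi (0 : ℝ))] g := by
    filter_upwards [ae_restrict_mem measurableSet_Ioi] with x hx using hg0 x hx
  refine ⟨⟨hgm.aestronglyMeasurable, ?_⟩, ?_⟩
  · rw [hasFiniteIntegral_iff_ofReal hg0', key]
    exact ENNReal.ofReal_lt_top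
  · rw [integral_eq_lintegral_of_nonneg_ae hg0' hgm.aestronglyMeasurable, key,
      ENNReal.toReal_ofReal hc]

lemma hasInt_gamma {s r : ℝ} (hs : 0 < s) (hr : 0 < r) :
    HasInt (fun t => t ^ (s - 1) * Real.exp (-(r * t))) ((1 / r) ^ s * Real.Gamma s) :=
  .of_ne_zero (Real.integral_rpow_mul_exp_neg_mul_Ioi hs hr)
    (mul_pos (by positivity) (Real.Gamma_pos_of_pos hs)).ne'

/-- The Laplace transform of `x ↦ sin² (lam * x)`, from an explicit primitive. -/
lemma hasInt_exp_mul_sin_sq {t : ℝ} (ht : 0 < t) (lam : ℝ) :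
    HasInt (fun x => Real.exp (-(t * x)) * Real.sin (lam * x) ^ 2)
      (2 * lam ^ 2 / (t * (t ^ 2 + 4 * lam ^ 2))) := by
  have hD : 0 < t ^ 2 + 4 * lam ^ 2 := by positivity
  let B : ℝ → ℝ := fun x =>
    -(1 / (2 * t)) - (2 * lam * Real.sin (2 * lam * x) - t * Real.cos (2 * lam * x))
      / (2 * (t ^ 2 + 4 * lam ^ 2))
  let F : ℝ → ℝ := fun x => Real.exp (-(t * x)) * B x
  have hderiv : ∀ x ∈ Ici (0 : ℝ),
      HasDerivAt F (Real.exp (-(t * x)) * Real.sin (lam * x) ^ 2) x := by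
    intro x _
    have h2 : HasDerivAt (fun x : ℝ => 2 * lam * x) (2 * lam) x := by
      simpa using (hasDerivAt_id x).const_mul (2 * lam)
    have h1 : HasDerivAt (fun x : ℝ => -(t * x)) (-t) x := by
      simp only [← neg_mul]
      simpa using (hasDerivAt_id x).const_mul (-t)
    have hB := ((((h2.sin.const_mul (2 * lam)).sub (h2.cos.const_mul t)).div_const
      (2 * (t ^ 2 + 4 * lam ^ 2))).const_sub (-(1 / (2 * t))))
    refine (h1.exp.mul hB).congr_deriv ?_
    have hc : Real.sin (lam * x) ^ 2 = (1 - Real.cos (2 * lam * x)) / 2 := by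
      rw [mul_assoc, Real.cos_two_mul, Real.cos_sq']; ring
    rw [hc]
    simp only [Pi.sub_apply]
    field_simp
    ring
  have hlim : Tendsto F atTop (nhds 0) := by
    have he : Tendsto (fun x : ℝ => Real.exp (-(t * x))) atTop (nhds 0) :=
      Real.tendsto_exp_neg_atTop_nhds_zero.comp (tendsto_id.const_mul_atTop ht)
    refine he.zero_mul_isBoundedUnder_le ?_
    refine isBoundedUnder_of ⟨1 / (2 * t) + (2 * |lam| + t) / (2 * (t ^ 2 + 4 * lam ^ 2)),
      fun x => ?_⟩
    simp only [Function.comp, B, Real.norm_eq_abs]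
    refine (abs_sub _ _).trans (add_le_add ?_ ?_)
    · rw [abs_neg, abs_of_pos (by positivity)]
    · rw [abs_div, abs_of_pos (by positivity : 0 < 2 * (t ^ 2 + 4 * lam ^ 2))]
      gcongr
      refine (abs_sub _ _).trans (add_le_add ?_ ?_)
      · rw [abs_mul, abs_mul, abs_two]
        exact mul_le_of_le_one_right (by positivity) (Real.abs_sin_le_one _)
      · rw [abs_mul, abs_of_pos ht]
        exact mul_le_of_le_one_right ht.le (Real.abs_cos_le_one _)
  have hpos : ∀ x ∈ Ioi (0 : ℝ), 0 ≤ Real.exp (-(t * x)) * Real.sin (lam * x) ^ 2 :=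
    fun x _ => by positivity
  refine ⟨integrableOn_Ioi_deriv_of_nonneg' hderiv hpos hlim, ?_⟩
  rw [integral_Ioi_of_hasDerivAt_of_nonneg' hderiv hpos hlim]
  simp only [F, B, mul_zero, neg_zero, Real.exp_zero, Real.sin_zero, Real.cos_zero]
  field_simp
  ring

/-- Tonelli with the kernel `t ^ (a - 1) * exp (-v (t² + b))`. -/
lemma hasInt_rpow_div {a b : ℝ} (ha : a ∈ Ioo (0 : ℝ) 2) (hb : 0 < b) :
    HasInt (fun t => t ^ (a - 1) / (t ^ 2 + b))
      (Real.Gamma (a / 2) / 2 * ((1 / b) ^ (1 - a / 2) * Real.Gamma (1 - a / 2))) := by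
  obtain ⟨ha0, ha2⟩ := ha
  refine HasInt.swap (f := fun t v => t ^ (a - 1) * Real.exp (-((t ^ 2 + b) * v)))
    (h := fun v => Real.Gamma (a / 2) / 2 * (v ^ ((1 - a / 2) - 1) * Real.exp (-(b * v))))
    (by simp only [Function.uncurry_def]; fun_prop) ?_ (by fun_prop) ?_ ?_
    ((hasInt_gamma (by linarith) hb).const_mul _)
  · intro t ht v hv
    positivity
  · intro t ht
    have h := (hasInt_gamma one_pos (by positivity : 0 < t ^ 2 + b)).const_mul (t ^ (a - 1))
    simpa [div_eq_mul_inv] using h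
  · intro v hv
    have h0 := integral_rpow_mul_exp_neg_mul_rpow (p := 2) (q := a - 1) (b := v) two_pos
      (by linarith) hv
    have hG := Real.Gamma_pos_of_pos (half_pos ha0)
    rw [show (a - 1 + 1) / 2 = a / 2 by ring, show -(a - 1 + 1) / 2 = 1 - a / 2 - 1 by ring] at h0
    have h := (HasInt.of_ne_zero h0 (by positivity)).const_mul (Real.exp (-(b * v)))
    rw [show Real.Gamma (a / 2) / 2 * (v ^ ((1 - a / 2) - 1) * Real.exp (-(b * v)))
      = Real.exp (-(b * v)) * (v ^ (1 - a / 2 - 1) * (1 / 2) * Real.Gamma (a / 2)) by ring]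
    refine h.congr fun t ht => ?_
    rw [show -((t ^ 2 + b) * v) = -(b * v) + -v * t ^ (2 : ℝ) by
      rw [Real.rpow_two]; ring, Real.exp_add]
    ring

/-- Tonelli with the kernel `t ^ a * exp (-t x) * sin² (lam * x)`, followed by the reflection
formula for `Γ`. -/
lemma hasInt_sin_sq {lam a : ℝ} (hlam : 0 < lam) (ha : a ∈ Ioo (0 : ℝ) 2) :
    HasInt (fun x => Real.sin (lam * x) ^ 2 / x ^ (a + 1))
      ((2 * lam) ^ a / 4 * (Real.pi / (Real.Gamma (a + 1) * Real.sin (a * Real.pi / 2)))) := by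
  have ha0 := ha.1
  have hG : 0 < Real.Gamma (a + 1) := Real.Gamma_pos_of_pos (by linarith)
  have key : HasInt (fun x => Real.sin (lam * x) ^ 2 * ((1 / x) ^ (a + 1) * Real.Gamma (a + 1)))
      (2 * lam ^ 2 * (Real.Gamma (a / 2) / 2 *
        ((1 / (4 * lam ^ 2)) ^ (1 - a / 2) * Real.Gamma (1 - a / 2)))) := by
    refine HasInt.swap
      (f := fun x t => Real.sin (lam * x) ^ 2 * (t ^ ((a + 1) - 1) * Real.exp (-(x * t))))
      (h := fun t => 2 * lam ^ 2 * (t ^ (a - 1) / (t ^ 2 + 4 * lam ^ 2)))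
      (by simp only [Function.uncurry_def]; fun_prop) ?_ (by fun_prop) ?_ ?_
      ((hasInt_rpow_div ha (by positivity)).const_mul _)
    · intro x hx t ht
      positivity
    · intro x hx
      exact (hasInt_gamma (by linarith) hx).const_mul _
    · intro t ht
      have h := (hasInt_exp_mul_sin_sq ht lam).const_mul (t ^ a)
      rw [show 2 * lam ^ 2 * (t ^ (a - 1) / (t ^ 2 + 4 * lam ^ 2))
        = t ^ a * (2 * lam ^ 2 / (t * (t ^ 2 + 4 * lam ^ 2))) by
          rw [Real.rpow_sub_one ht.ne']; field_simp]
      refine h.congr fun x hx => ?_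
      rw [add_sub_cancel_right, mul_comm x t]
      ring
  have h := key.const_mul (Real.Gamma (a + 1))⁻¹
  have hval : (Real.Gamma (a + 1))⁻¹ * (2 * lam ^ 2 * (Real.Gamma (a / 2) / 2 *
        ((1 / (4 * lam ^ 2)) ^ (1 - a / 2) * Real.Gamma (1 - a / 2))))
      = (2 * lam) ^ a / 4 * (Real.pi / (Real.Gamma (a + 1) * Real.sin (a * Real.pi / 2))) := by
    have hr := Real.Gamma_mul_Gamma_one_sub (a / 2)
    rw [show Real.pi * (a / 2) = a * Real.pi / 2 by ring] at hr
    have hp : (1 / (4 * lam ^ 2)) ^ (1 - a / 2) = (2 * lam) ^ a / (4 * lam ^ 2) := by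
      rw [show 4 * lam ^ 2 = (2 * lam) ^ (2 : ℝ) by rw [Real.rpow_two]; ring, one_div,
        ← Real.rpow_neg (by positivity), ← Real.rpow_mul (by positivity),
        ← Real.rpow_sub (by positivity)]
      congr 1
      ring
    calc _ = (Real.Gamma (a + 1))⁻¹ * (lam ^ 2 * (1 / (4 * lam ^ 2)) ^ (1 - a / 2)) *
          (Real.Gamma (a / 2) * Real.Gamma (1 - a / 2)) := by ring
      _ = _ := by
        rw [hr, hp]
        field_simp
  rw [hval] at h
  refine h.congr fun x hx => ?_
  rw [one_div, Real.inv_rpow (le_of_lt hx)]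
  field_simp

/-- Integration by parts on `(0, T)`: the boundary term at `0` vanishes because
`sin² (m * x) = O(x²)` and `a < 2`. -/
lemma integral_sin_div_eq {m a T : ℝ} (hm : 0 < m) (ha : a ∈ Ioo (0 : ℝ) 2) (hT : 0 < T) :
    ∫ x in (0 : ℝ)..T, Real.sin (2 * m * x) / x ^ a
      = m⁻¹ * (Real.sin (m * T) ^ 2 / T ^ a
        + a * ∫ x in (0 : ℝ)..T, Real.sin (m * x) ^ 2 / x ^ (a + 1)) := by
  obtain ⟨ha0, ha2⟩ := id ha
  have hi2 : IntervalIntegrable (fun x => Real.sin (m * x) ^ 2 / x ^ (a + 1)) volume 0 T :=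
    (intervalIntegrable_iff_integrableOn_Ioc_of_le hT.le).2
      ((hasInt_sin_sq hm ha).1.mono_set Ioc_subset_Ioi_self)
  have hi1 : IntervalIntegrable (fun x => Real.sin (2 * m * x) / x ^ a) volume 0 T := by
    refine ((intervalIntegral.intervalIntegrable_rpow' (r := 1 - a) (by linarith)).const_mul
      (2 * m)).mono_fun (Measurable.aestronglyMeasurable (by fun_prop)) ?_
    filter_upwards [ae_restrict_mem measurableSet_uIoc] with x hx
    rw [uIoc_of_le hT.le] at hx
    have hx0 := hx.1
    rw [Real.norm_eq_abs, Real.norm_eq_abs, abs_div, abs_of_pos (Real.rpow_pos_of_pos hx0 a),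
      abs_of_pos (by positivity : 0 < 2 * m * x ^ (1 - a)), Real.rpow_sub hx0, Real.rpow_one,
      ← mul_div_assoc]
    gcongr
    exact Real.abs_sin_le_abs.trans (abs_of_pos (by positivity)).le
  have hcont : ContinuousOn (fun x => Real.sin (m * x) ^ 2 / x ^ a) (Icc 0 T) := by
    intro x hx
    rcases hx.1.eq_or_lt with rfl | hx0
    · have hz : Tendsto (fun x : ℝ => m ^ 2 * x ^ (2 - a)) (nhdsWithin 0 (Icc 0 T)) (nhds 0) := by
        have : ContinuousAt (fun x : ℝ => m ^ 2 * x ^ (2 - a)) 0 :=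
          (Real.continuousAt_rpow_const 0 (2 - a) (Or.inr (by linarith))).const_mul _
        have h := this.tendsto
        rw [Real.zero_rpow (by linarith), mul_zero] at h
        exact h.mono_left nhdsWithin_le_nhds
      unfold ContinuousWithinAt
      simp only [mul_zero, Real.sin_zero, ne_eq, OfNat.ofNat_ne_zero, not_false_eq_true, zero_pow,
        zero_div]
      refine squeeze_zero' ?_ ?_ hz
      · filter_upwards [self_mem_nhdsWithin] with y hy
        have := hy.1
        positivity
      · filter_upwards [self_mem_nhdsWithin] with y hy
        rcases hy.1.eq_or_lt with rfl | hy0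
        · simp only [mul_zero, Real.sin_zero, ne_eq, OfNat.ofNat_ne_zero, not_false_eq_true,
            zero_pow, zero_div]
          positivity
        · rw [Real.rpow_sub hy0, Real.rpow_two, ← mul_div_assoc, ← mul_pow]
          exact div_le_div_of_nonneg_right (sq_le_sq.2 Real.abs_sin_le_abs) (by positivity)
    · refine ContinuousAt.continuousWithinAt (ContinuousAt.div (by fun_prop) ?_ ?_)
      · exact Real.continuousAt_rpow_const x a (Or.inl hx0.ne')
      · positivity
  have hderiv : ∀ x ∈ Ioo 0 T, HasDerivAt (fun x => Real.sin (m * x) ^ 2 / x ^ a)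
      (m * (Real.sin (2 * m * x) / x ^ a) - a * (Real.sin (m * x) ^ 2 / x ^ (a + 1))) x := by
    intro x hx
    have hx0 := hx.1
    have h1 : HasDerivAt (fun x : ℝ => m * x) m x := by
      simpa using (hasDerivAt_id x).const_mul m
    have h2 := Real.hasDerivAt_rpow_const (x := x) (p := a) (Or.inl hx0.ne')
    refine ((h1.sin.pow 2).div h2 (by positivity)).congr_deriv ?_
    rw [Real.rpow_sub_one hx0.ne', Real.rpow_add_one hx0.ne', mul_assoc 2 m x, Real.sin_two_mul]
    have : x ^ a ≠ 0 := by positivity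
    simp only [Pi.pow_apply]
    field_simp
    ring
  have hftc := intervalIntegral.integral_eq_sub_of_hasDerivAt_of_le hT.le hcont hderiv
    ((hi1.const_mul m).sub (hi2.const_mul a))
  rw [intervalIntegral.integral_sub (hi1.const_mul m) (hi2.const_mul a),
    intervalIntegral.integral_const_mul, intervalIntegral.integral_const_mul] at hftc
  simp only [mul_zero, Real.sin_zero, ne_eq, OfNat.ofNat_ne_zero, not_false_eq_true, zero_pow,
    zero_div, sub_zero] at hftc
  rw [← hftc]
  field_simp
  ring

/-- Lemma 1.1 of Bardet–Dola: for `0 < a < 2` and `λ > 0`, the improper integrals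
`∫₀^∞ sin(λx)/x^a dx` and `∫₀^∞ sin²(λx)/x^{a+1} dx` converge and
`(2/λ^{a-1}) ∫₀^∞ sin(λx)/x^a dx = (4a/(2^a λ^a)) ∫₀^∞ sin²(λx)/x^{a+1} dx
  = π/(Γ(a) sin(aπ/2))`. -/
theorem stmt_0 (lam a : ℝ) (hlam : 0 < lam) (ha : a ∈ Set.Ioo (0 : ℝ) 2) :
    ∃ I₁ I₂ : ℝ,
      Tendsto (fun T : ℝ => ∫ x in (0 : ℝ)..T, Real.sin (lam * x) / x ^ a)
        atTop (nhds I₁) ∧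
      Tendsto (fun T : ℝ => ∫ x in (0 : ℝ)..T, Real.sin (lam * x) ^ 2 / x ^ (a + 1))
        atTop (nhds I₂) ∧
      2 / lam ^ (a - 1) * I₁ = 4 * a / (2 ^ a * lam ^ a) * I₂ ∧
      2 / lam ^ (a - 1) * I₁ = Real.pi / (Real.Gamma a * Real.sin (a * Real.pi / 2)) := by
  have ha0 := ha.1
  have hT : ∀ {m : ℝ}, 0 < m →
      Tendsto (fun T : ℝ => ∫ x in (0 : ℝ)..T, Real.sin (m * x) ^ 2 / x ^ (a + 1)) atTop
        (nhds ((2 * m) ^ a / 4 *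
          (Real.pi / (Real.Gamma (a + 1) * Real.sin (a * Real.pi / 2))))) := fun hm => by
    rw [← (hasInt_sin_sq hm ha).2]
    exact intervalIntegral_tendsto_integral_Ioi 0 (hasInt_sin_sq hm ha).1 tendsto_id
  have hm : 0 < lam / 2 := half_pos hlam
  have hbdry : Tendsto (fun T : ℝ => Real.sin (lam / 2 * T) ^ 2 / T ^ a) atTop (nhds 0) := by
    refine squeeze_zero' ?_ ?_ (tendsto_rpow_neg_atTop ha0)
    · filter_upwards [eventually_gt_atTop 0] with T hT0
      positivity
    · filter_upwards [eventually_gt_atTop 0] with T hT0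
      rw [Real.rpow_neg hT0.le, ← one_div]
      gcongr
      exact Real.sin_sq_le_one _
  have h1 := (hbdry.add ((hT hm).const_mul a)).const_mul (lam / 2)⁻¹
  have hG : 0 < Real.Gamma a := Real.Gamma_pos_of_pos ha0
  have hS : 0 < Real.sin (a * Real.pi / 2) :=
    Real.sin_pos_of_pos_of_lt_pi (by positivity) (by nlinarith [Real.pi_pos, ha.2])
  refine ⟨_, _, h1.congr' ?_, hT hlam, ?_, ?_⟩
  · filter_upwards [eventually_gt_atTop 0] with T hT0
    rw [← integral_sin_div_eq hm ha hT0, show 2 * (lam / 2) = lam by ring]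
  all_goals
    rw [Real.Gamma_add_one ha0.ne', show 2 * (lam / 2) = lam by ring, Real.rpow_sub_one hlam.ne']
    try rw [Real.mul_rpow two_pos.le hlam.le]
    field_simp
    try ring
end

section
/- For every real number λ > 0 and every b ∈ (−1,1), the integrals ∫₀^∞ sin⁴(λx)/x^{4−b} dx and ∫₀^∞ sin⁶(λx)/x^{4−b} dx converge and satisfy (1/(2^{1−b} − 1)) · ∫₀^∞ sin⁴(λx)/x^{4−b} dx = (16/(−15 + 6·2^{3−b} − 3^{3−b})) · ∫₀^∞ sin⁶(λx)/x^{4−b} dx = 2^{3−b} λ^{3−b} π / (4 Γ(4−b) sin((1−b)π/2)). -/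
/-!
Write `s = 4 - b ∈ (3, 5)`. Inserting `Γ(s) / x ^ s = ∫₀^∞ t ^ (s - 1) e^{-tx} dt` and exchanging the
integrals (Tonelli, all integrands being nonnegative) turns `Γ(s) ∫₀^∞ f(x) / x ^ s dx` into
`∫₀^∞ t ^ (s - 1) g(t) dt`, where `g` is the Laplace transform of `f ≥ 0`
(`lintegral_laplace_swap`).

Both `sin⁴(λx)` and `sin⁶(λx)` are combinations `a₀ + ∑ aⱼ cos(2jλx)` whose value and second
derivative at `0` vanish. Since `cos(kx)` has Laplace transform `t / (t² + k²)` and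
`t⁴ / (t² + k²) = t² - k² + k⁴ / (t² + k²)`, these two conditions cancel the polynomial part, so that
`t ^ (s - 1) g(t) = ∑ aⱼ (2jλ)⁴ t ^ (-b) / (t² + (2jλ)²)`, with every summand integrable because
`-1 < b < 1`. Each summand reduces to Euler's integral
`∫₀^∞ u ^ (q - 1) / (1 + u) du = π / sin(πq)`, which is itself an instance of the exchange above
(with `f(x) = e^{-x}`) combined with the reflection formula for `Γ`. The outcome is
`integral_cos_combination`.

The factor `-15 + 6·2^{3-b} - 3^{3-b}` is nonzero because it is a multiple of the integral of
`sin⁶(λx) / x ^ (4 - b)`, which is positive.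
-/

open MeasureTheory Filter

/-- Tonelli's theorem for `t ^ (s - 1) f(x) e^{-tx}` on the quadrant: `g` is the Laplace transform of
the nonnegative function `f`. Stated with lower integrals, so that either side may be infinite and
integrability can be transferred in both directions. -/
lemma lintegral_laplace_swap (f g : ℝ → ℝ) (hf : Continuous f) (hf0 : ∀ x, 0 ≤ f x) {s : ℝ}
    (hs : 0 < s)
    (hg : ∀ t, 0 < t → IntegrableOn (fun x => f x * Real.exp (-(t * x))) (Set.Ioi 0) ∧
      ∫ x in Set.Ioi (0 : ℝ), f x * Real.exp (-(t * x)) = g t) :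
    ∫⁻ t in Set.Ioi (0 : ℝ), ENNReal.ofReal (t ^ (s - 1) * g t) =
      ∫⁻ x in Set.Ioi (0 : ℝ), ENNReal.ofReal (Real.Gamma s * (f x / x ^ s)) := by
  have h1 : ∀ t ∈ Set.Ioi (0 : ℝ), ENNReal.ofReal (t ^ (s - 1) * g t) =
      ∫⁻ x in Set.Ioi (0 : ℝ), ENNReal.ofReal (t ^ (s - 1) * (f x * Real.exp (-(t * x)))) := by
    intro t ht
    rw [← (hg t ht).2, ← integral_const_mul]
    refine ofReal_integral_eq_lintegral_ofReal ((hg t ht).1.const_mul _) (ae_of_all _ fun x => ?_)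
    have := Real.rpow_nonneg (le_of_lt ht) (s - 1)
    have := hf0 x
    positivity
  have h2 : ∀ x ∈ Set.Ioi (0 : ℝ), ENNReal.ofReal (Real.Gamma s * (f x / x ^ s)) =
      ∫⁻ t in Set.Ioi (0 : ℝ), ENNReal.ofReal (t ^ (s - 1) * (f x * Real.exp (-(t * x)))) := by
    intro x hx
    have hx' : 0 < x := hx
    have key : ∫ t in Set.Ioi (0 : ℝ), t ^ (s - 1) * Real.exp (-(x * t)) =
        (1 / x) ^ s * Real.Gamma s := Real.integral_rpow_mul_exp_neg_mul_Ioi hs hx'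
    have hint : IntegrableOn (fun t => t ^ (s - 1) * Real.exp (-(x * t))) (Set.Ioi 0) := by
      refine Integrable.of_integral_ne_zero ?_
      rw [key]
      have := Real.Gamma_pos_of_pos hs
      positivity
    have e : Real.Gamma s * (f x / x ^ s) =
        ∫ t in Set.Ioi (0 : ℝ), t ^ (s - 1) * (f x * Real.exp (-(t * x))) := by
      have : ∀ t, t ^ (s - 1) * (f x * Real.exp (-(t * x))) =
          f x * (t ^ (s - 1) * Real.exp (-(x * t))) := fun t => by rw [mul_comm t x]; ring
      simp_rw [this]
      rw [integral_const_mul, key, one_div, Real.inv_rpow hx'.le]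
      ring
    rw [e]
    refine ofReal_integral_eq_lintegral_ofReal ?_ ?_
    · refine (hint.const_mul (f x)).congr (ae_of_all _ fun t => ?_)
      simp only [mul_comm t x]; ring
    · refine (ae_restrict_iff' measurableSet_Ioi).2 (ae_of_all _ fun t ht => ?_)
      have := Real.rpow_nonneg (le_of_lt ht) (s - 1)
      have := hf0 x
      simp only [Pi.zero_apply]
      positivity
  rw [setLIntegral_congr_fun measurableSet_Ioi h1, setLIntegral_congr_fun measurableSet_Ioi h2]
  refine lintegral_lintegral_swap ?_
  have := hf.measurable
  refine Measurable.aemeasurable ?_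
  unfold Function.uncurry
  fun_prop

/-- A finite lower integral of a nonnegative function gives integrability together with the value of
the Bochner integral. -/
lemma integral_of_lintegral {F : ℝ → ℝ} {I : ℝ} (hF : Measurable F)
    (hF0 : ∀ x ∈ Set.Ioi (0 : ℝ), 0 ≤ F x) (hI : 0 ≤ I)
    (h : ∫⁻ x in Set.Ioi (0 : ℝ), ENNReal.ofReal (F x) = ENNReal.ofReal I) :
    IntegrableOn F (Set.Ioi 0) ∧ ∫ x in Set.Ioi (0 : ℝ), F x = I := by
  have h0 : 0 ≤ᵐ[volume.restrict (Set.Ioi (0 : ℝ))] F :=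
    (ae_restrict_iff' measurableSet_Ioi).2 (ae_of_all _ hF0)
  constructor
  · refine ⟨hF.aestronglyMeasurable, ?_⟩
    rw [hasFiniteIntegral_iff_ofReal h0, h]
    exact ENNReal.ofReal_lt_top
  · rw [integral_eq_lintegral_of_nonneg_ae h0 hF.aestronglyMeasurable, h,
      ENNReal.toReal_ofReal hI]

lemma laplace_cos (k : ℝ) {t : ℝ} (ht : 0 < t) :
    IntegrableOn (fun x => Real.cos (k * x) * Real.exp (-(t * x))) (Set.Ioi 0) ∧
      ∫ x in Set.Ioi (0 : ℝ), Real.cos (k * x) * Real.exp (-(t * x)) = t / (t ^ 2 + k ^ 2) := by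
  have ha : ((⟨-t, k⟩ : ℂ)).re < 0 := by simpa using ht
  have hi := integrableOn_exp_mul_complex_Ioi ha 0
  have hv := integral_exp_mul_complex_Ioi ha 0
  have e : ∀ x : ℝ, Real.cos (k * x) * Real.exp (-(t * x)) =
      (Complex.exp ((⟨-t, k⟩ : ℂ) * x)).re := by
    intro x
    simp [Complex.exp_re, mul_comm]
  simp_rw [e]
  refine ⟨hi.re, ?_⟩
  have := integral_re hi
  simp only [RCLike.re_to_complex] at this
  rw [this, hv]
  simp [Complex.div_re, Complex.normSq_apply]
  ring

/-- Euler's integral, from `lintegral_laplace_swap` with `f(x) = e^{-x}`, whose other side is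
`Γ(q) Γ(1 - q)`. -/
lemma integral_rpow_div_one_add {q : ℝ} (hq0 : 0 < q) (hq1 : q < 1) :
    IntegrableOn (fun u : ℝ => u ^ (q - 1) * (1 / (1 + u))) (Set.Ioi 0) ∧
      ∫ u in Set.Ioi (0 : ℝ), u ^ (q - 1) * (1 / (1 + u)) = Real.pi / Real.sin (Real.pi * q) := by
  have hsin : 0 < Real.sin (Real.pi * q) := by
    apply Real.sin_pos_of_pos_of_lt_pi <;> nlinarith [Real.pi_pos]
  have hG := Real.Gamma_pos_of_pos hq0
  refine integral_of_lintegral (by fun_prop) (fun x hx => ?_) (by positivity) ?_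
  · have : (0 : ℝ) < x := hx
    positivity
  have sw := lintegral_laplace_swap (fun x => Real.exp (-x)) (fun t => 1 / (1 + t))
    (by fun_prop) (fun x => by positivity) hq0 (fun t ht => by
      have e : ∀ x : ℝ, Real.exp (-x) * Real.exp (-(t * x)) = Real.exp (-(1 + t) * x) := fun x => by
        rw [← Real.exp_add]; ring_nf
      simp_rw [e]
      have ht' : -(1 + t) < 0 := by linarith
      refine ⟨integrableOn_exp_mul_Ioi ht' 0, ?_⟩
      rw [integral_exp_mul_Ioi ht' 0, mul_zero, Real.exp_zero, neg_div_neg_eq])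
  have key := Real.Gamma_eq_integral (s := 1 - q) (by linarith)
  have hc := Real.GammaIntegral_convergent (s := 1 - q) (by linarith)
  rw [sw, ← Real.Gamma_mul_Gamma_one_sub, key, ← integral_const_mul,
    ofReal_integral_eq_lintegral_ofReal (hc.const_mul _)]
  · refine setLIntegral_congr_fun measurableSet_Ioi fun x hx => ?_
    have : (0 : ℝ) < x := hx
    rw [show 1 - q - 1 = -q by ring, Real.rpow_neg this.le]
    rfl
  · refine (ae_restrict_iff' measurableSet_Ioi).2 (ae_of_all _ fun t ht => ?_)
    have : (0 : ℝ) < t := ht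
    simp only [Pi.zero_apply]
    positivity

/-- Euler's integral after the substitution `u = (t / c) ^ 2`, with `q = (1 + p) / 2`. -/
lemma integral_rpow_div_sq_add_sq {p c : ℝ} (hp : -1 < p) (hp1 : p < 1) (hc : 0 < c) :
    IntegrableOn (fun t : ℝ => t ^ p / (t ^ 2 + c ^ 2)) (Set.Ioi 0) ∧
      ∫ t in Set.Ioi (0 : ℝ), t ^ p / (t ^ 2 + c ^ 2) =
        c ^ (p - 1) * (Real.pi / (2 * Real.sin ((1 + p) * Real.pi / 2))) := by
  have h := integral_rpow_div_one_add (q := (1 + p) / 2) (by linarith) (by linarith)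
  have hsin : Real.sin (Real.pi * ((1 + p) / 2)) = Real.sin ((1 + p) * Real.pi / 2) := by ring_nf
  rw [hsin] at h
  have hsc : ∀ t ∈ Set.Ioi (0 : ℝ), t ^ p / (t ^ 2 + c ^ 2) =
      c ^ (p - 2) / 2 * ((2 * (c⁻¹ * t) ^ ((2 : ℝ) - 1)) •
        (((c⁻¹ * t) ^ (2 : ℝ)) ^ ((1 + p) / 2 - 1) * (1 / (1 + (c⁻¹ * t) ^ (2 : ℝ))))) := by
    intro t ht
    have ht' : (0 : ℝ) < t := ht
    rw [← Real.rpow_mul (by positivity), show (2 : ℝ) * ((1 + p) / 2 - 1) = p - 1 by ring,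
      Real.rpow_sub_one (by positivity) p, Real.rpow_two, show (2 : ℝ) - 1 = 1 by norm_num,
      Real.rpow_one, Real.mul_rpow (by positivity) ht'.le, Real.inv_rpow hc.le,
      Real.rpow_sub hc, Real.rpow_two, smul_eq_mul]
    have : c ^ p ≠ 0 := by positivity
    have : t ^ 2 + c ^ 2 ≠ 0 := by positivity
    have : 1 + (c⁻¹ * t) ^ 2 ≠ 0 := by positivity
    have : c ^ 2 + t ^ 2 ≠ 0 := by positivity
    field_simp
    ring
  have hi := (integrableOn_Ioi_comp_rpow_iff _ (two_ne_zero (α := ℝ))).2 h.1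
  rw [abs_of_pos (two_pos (α := ℝ))] at hi
  have hv := integral_comp_rpow_Ioi_of_pos
    (g := fun u : ℝ => u ^ ((1 + p) / 2 - 1) * (1 / (1 + u))) (two_pos (α := ℝ))
  constructor
  · rw [integrableOn_congr_fun hsc measurableSet_Ioi]
    refine Integrable.const_mul ?_ _
    have := (integrableOn_Ioi_comp_mul_left_iff (fun x : ℝ => (2 * x ^ ((2 : ℝ) - 1)) •
      ((x ^ (2 : ℝ)) ^ ((1 + p) / 2 - 1) * (1 / (1 + x ^ (2 : ℝ))))) 0 (inv_pos.2 hc)).2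
      (by simpa using hi)
    exact this
  · rw [setIntegral_congr_fun measurableSet_Ioi hsc, integral_const_mul,
      integral_comp_mul_left_Ioi (fun x : ℝ => (2 * x ^ ((2 : ℝ) - 1)) •
      ((x ^ (2 : ℝ)) ^ ((1 + p) / 2 - 1) * (1 / (1 + x ^ (2 : ℝ))))) 0 (inv_pos.2 hc),
      mul_zero, hv, h.2, smul_eq_mul, inv_inv, Real.rpow_sub hc, Real.rpow_sub hc, Real.rpow_two,
      Real.rpow_one]
    field_simp

/-- A nonnegative cosine polynomial `f` in `2λx` with `f(0) = 0` (hypothesis `h0`) and `f''(0) = 0`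
(hypothesis `h2`) is integrable against `x ^ (b - 4)`, with the value obtained from its Laplace
transform. -/
lemma integral_cos_combination {lam b a₀ a₁ a₂ a₃ : ℝ} (hlam : 0 < lam) (hb : -1 < b) (hb1 : b < 1)
    {f : ℝ → ℝ} (hf0 : ∀ x, 0 ≤ f x)
    (hf : ∀ x, f x = a₀ + a₁ * Real.cos (2 * lam * x) + a₂ * Real.cos (4 * lam * x) +
      a₃ * Real.cos (6 * lam * x))
    (h0 : a₀ + a₁ + a₂ + a₃ = 0) (h2 : a₁ + 4 * a₂ + 9 * a₃ = 0) :
    IntegrableOn (fun x => f x / x ^ (4 - b)) (Set.Ioi 0) ∧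
      ∫ x in Set.Ioi (0 : ℝ), f x / x ^ (4 - b) =
        (2 * lam) ^ (3 - b) * (Real.pi / (2 * Real.sin ((1 - b) * Real.pi / 2))) *
          (a₁ + a₂ * 2 ^ (3 - b) + a₃ * 3 ^ (3 - b)) / Real.Gamma (4 - b) := by
  have hG : 0 < Real.Gamma (4 - b) := Real.Gamma_pos_of_pos (by linarith)
  have hfc : Continuous f := by
    rw [funext hf]; fun_prop
  set g : ℝ → ℝ := fun t => a₀ * (t / (t ^ 2 + 0 ^ 2)) + a₁ * (t / (t ^ 2 + (2 * lam) ^ 2)) +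
    a₂ * (t / (t ^ 2 + (4 * lam) ^ 2)) + a₃ * (t / (t ^ 2 + (6 * lam) ^ 2)) with hgdef
  have hg : ∀ t, 0 < t → IntegrableOn (fun x => f x * Real.exp (-(t * x))) (Set.Ioi 0) ∧
      ∫ x in Set.Ioi (0 : ℝ), f x * Real.exp (-(t * x)) = g t := by
    intro t ht
    have e : ∀ x, f x * Real.exp (-(t * x)) =
        a₀ * (Real.cos (0 * x) * Real.exp (-(t * x))) +
        a₁ * (Real.cos (2 * lam * x) * Real.exp (-(t * x))) +
        a₂ * (Real.cos (4 * lam * x) * Real.exp (-(t * x))) +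
        a₃ * (Real.cos (6 * lam * x) * Real.exp (-(t * x))) := by
      intro x; rw [hf, zero_mul, Real.cos_zero]; ring
    simp_rw [e]
    have i0 := (laplace_cos 0 ht).1.const_mul a₀
    have i1 := (laplace_cos (2 * lam) ht).1.const_mul a₁
    have i2 := (laplace_cos (4 * lam) ht).1.const_mul a₂
    have i3 := (laplace_cos (6 * lam) ht).1.const_mul a₃
    refine ⟨((i0.add i1).add i2).add i3, ?_⟩
    rw [integral_add ((i0.fun_add i1).fun_add i2) i3, integral_add (i0.fun_add i1) i2, integral_add i0 i1]
    simp only [integral_const_mul, (laplace_cos _ ht).2, hgdef]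
  have hg0 : ∀ t, 0 < t → 0 ≤ g t := fun t ht => by
    rw [← (hg t ht).2]
    exact integral_nonneg fun x => mul_nonneg (hf0 x) (Real.exp_pos _).le
  have hE : ∀ t ∈ Set.Ioi (0 : ℝ), t ^ (4 - b - 1) * g t =
      a₁ * (2 * lam) ^ 4 * (t ^ (-b) / (t ^ 2 + (2 * lam) ^ 2)) +
      a₂ * (4 * lam) ^ 4 * (t ^ (-b) / (t ^ 2 + (4 * lam) ^ 2)) +
      a₃ * (6 * lam) ^ 4 * (t ^ (-b) / (t ^ 2 + (6 * lam) ^ 2)) := by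
    intro t ht
    have ht' : (0 : ℝ) < t := ht
    have hpow : t ^ (4 - b - 1) = t ^ (-b) * t ^ 3 := by
      rw [show 4 - b - 1 = -b + (3 : ℕ) by push_cast; ring, Real.rpow_add_natCast ht'.ne']
    have hk : ∀ k : ℝ, t ^ 3 * (t / (t ^ 2 + k ^ 2)) = t ^ 2 - k ^ 2 + k ^ 4 / (t ^ 2 + k ^ 2) := by
      intro k
      have : t ^ 2 + k ^ 2 ≠ 0 := by positivity
      field_simp
      ring
    rw [hpow]
    simp only [hgdef]
    -- `h0` and `h2` cancel the polynomial parts `∑ aⱼ t²` and `∑ aⱼ (2jλ)²`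
    linear_combination t ^ (-b) * (a₀ * hk 0 + a₁ * hk (2 * lam) + a₂ * hk (4 * lam) +
      a₃ * hk (6 * lam) + t ^ 2 * h0 - 4 * lam ^ 2 * h2)
  have j : ∀ k : ℝ, 0 < k → _ := fun k hk =>
    integral_rpow_div_sq_add_sq (p := -b) (c := k) (by linarith) (by linarith) hk
  have j1 := j (2 * lam) (by positivity)
  have j2 := j (4 * lam) (by positivity)
  have j3 := j (6 * lam) (by positivity)
  have i1 := j1.1.const_mul (a₁ * (2 * lam) ^ 4)
  have i2 := j2.1.const_mul (a₂ * (4 * lam) ^ 4)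
  have i3 := j3.1.const_mul (a₃ * (6 * lam) ^ 4)
  have hgint : IntegrableOn (fun t => t ^ (4 - b - 1) * g t) (Set.Ioi 0) := by
    rw [integrableOn_congr_fun hE measurableSet_Ioi]
    exact (i1.add i2).add i3
  have hval : ∫ t in Set.Ioi (0 : ℝ), t ^ (4 - b - 1) * g t =
      (2 * lam) ^ (3 - b) * (Real.pi / (2 * Real.sin ((1 - b) * Real.pi / 2))) *
          (a₁ + a₂ * 2 ^ (3 - b) + a₃ * 3 ^ (3 - b)) := by
    rw [setIntegral_congr_fun measurableSet_Ioi hE, integral_add (i1.fun_add i2) i3,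
      integral_add i1 i2]
    simp only [integral_const_mul]
    rw [j1.2, j2.2, j3.2]
    have hp : ∀ k : ℝ, 0 < k → k ^ 4 * k ^ (-b - 1) = k ^ (3 - b) := by
      intro k hk
      rw [show 3 - b = -b - 1 + (4 : ℕ) by push_cast; ring, Real.rpow_add_natCast hk.ne', mul_comm]
    have e1 := hp (2 * lam) (by positivity)
    have e2 := hp (4 * lam) (by positivity)
    have e3 := hp (6 * lam) (by positivity)
    have m2 : (4 * lam) ^ (3 - b) = 2 ^ (3 - b) * (2 * lam) ^ (3 - b) := by
      rw [← Real.mul_rpow (by norm_num) (by positivity)]; ring_nf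
    have m3 : (6 * lam) ^ (3 - b) = 3 ^ (3 - b) * (2 * lam) ^ (3 - b) := by
      rw [← Real.mul_rpow (by norm_num) (by positivity)]; ring_nf
    rw [m2] at e2
    rw [m3] at e3
    rw [← sub_eq_add_neg 1 b]
    linear_combination (Real.pi / (2 * Real.sin ((1 - b) * Real.pi / 2))) *
      (a₁ * e1 + a₂ * e2 + a₃ * e3)
  have hnn : ∀ t ∈ Set.Ioi (0 : ℝ), 0 ≤ t ^ (4 - b - 1) * g t := fun t ht =>
    mul_nonneg (Real.rpow_nonneg (le_of_lt ht) _) (hg0 t ht)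
  have sw := lintegral_laplace_swap f g hfc hf0 (s := 4 - b) (by linarith) hg
  rw [← ofReal_integral_eq_lintegral_ofReal hgint
    ((ae_restrict_iff' measurableSet_Ioi).2 (ae_of_all _ hnn))] at sw
  have hfm := hfc.measurable
  obtain ⟨r1, r2⟩ := integral_of_lintegral (by fun_prop)
    (fun x hx => mul_nonneg hG.le (div_nonneg (hf0 x) (Real.rpow_nonneg (le_of_lt hx) _)))
    (setIntegral_nonneg measurableSet_Ioi hnn) sw.symm
  refine ⟨?_, ?_⟩
  · refine (r1.const_mul (Real.Gamma (4 - b))⁻¹).congr (ae_of_all _ fun x => ?_)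
    simp only
    field_simp
  · rw [integral_const_mul, hval] at r2
    rw [eq_div_iff hG.ne', mul_comm, r2]

/-- Lemma 1.2 of Bardet–Dola: for `-1 < b < 1` and `λ > 0`, the integrals
`∫₀^∞ sin⁴(λx)/x^{4-b} dx` and `∫₀^∞ sin⁶(λx)/x^{4-b} dx` converge and
`(1/(2^{1-b}-1)) ∫₀^∞ sin⁴(λx)/x^{4-b} dx
  = (16/(-15+6·2^{3-b}-3^{3-b})) ∫₀^∞ sin⁶(λx)/x^{4-b} dx
  = 2^{3-b} λ^{3-b} π /(4 Γ(4-b) sin((1-b)π/2))`. -/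
theorem stmt_1 (lam b : ℝ) (hlam : 0 < lam) (hb : b ∈ Set.Ioo (-1 : ℝ) 1) :
    ∃ I₄ I₆ : ℝ,
      Tendsto (fun T : ℝ => ∫ x in (0 : ℝ)..T, Real.sin (lam * x) ^ 4 / x ^ (4 - b))
        atTop (nhds I₄) ∧
      Tendsto (fun T : ℝ => ∫ x in (0 : ℝ)..T, Real.sin (lam * x) ^ 6 / x ^ (4 - b))
        atTop (nhds I₆) ∧
      1 / (2 ^ (1 - b) - 1) * I₄ = 16 / (-15 + 6 * 2 ^ (3 - b) - 3 ^ (3 - b)) * I₆ ∧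
      1 / (2 ^ (1 - b) - 1) * I₄ =
        2 ^ (3 - b) * lam ^ (3 - b) * Real.pi /
          (4 * Real.Gamma (4 - b) * Real.sin ((1 - b) * Real.pi / 2)) := by
  obtain ⟨hb0, hb1⟩ := hb
  have hG : 0 < Real.Gamma (4 - b) := Real.Gamma_pos_of_pos (by linarith)
  have hsin : 0 < Real.sin ((1 - b) * Real.pi / 2) := by
    apply Real.sin_pos_of_pos_of_lt_pi <;> nlinarith [Real.pi_pos]
  have c2 : ∀ x, Real.cos (2 * lam * x) = 1 - 2 * Real.sin (lam * x) ^ 2 := fun x => by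
    rw [mul_assoc, Real.cos_two_mul, Real.cos_sq']; ring
  have c4 : ∀ x, Real.cos (4 * lam * x) = 2 * (1 - 2 * Real.sin (lam * x) ^ 2) ^ 2 - 1 := fun x => by
    rw [← c2, ← Real.cos_two_mul]; ring_nf
  have c6 : ∀ x, Real.cos (6 * lam * x) =
      4 * (1 - 2 * Real.sin (lam * x) ^ 2) ^ 3 - 3 * (1 - 2 * Real.sin (lam * x) ^ 2) := fun x => by
    rw [← c2, ← Real.cos_three_mul]; ring_nf
  obtain ⟨hi4, hv4⟩ := integral_cos_combination (a₀ := 3 / 8) (a₁ := -1 / 2) (a₂ := 1 / 8) (a₃ := 0)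
    hlam hb0 hb1 (f := fun x => Real.sin (lam * x) ^ 4) (fun x => by positivity)
    (fun x => by rw [c2, c4]; ring) (by norm_num) (by norm_num)
  obtain ⟨hi6, hv6⟩ := integral_cos_combination (a₀ := 10 / 32) (a₁ := -15 / 32) (a₂ := 6 / 32)
    (a₃ := -1 / 32) hlam hb0 hb1 (f := fun x => Real.sin (lam * x) ^ 6) (fun x => by positivity)
    (fun x => by rw [c2, c4, c6]; ring) (by norm_num) (by norm_num)
  have hpos : 0 < ∫ x in Set.Ioi (0 : ℝ), Real.sin (lam * x) ^ 6 / x ^ (4 - b) := by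
    rw [setIntegral_pos_iff_support_of_nonneg_ae _ hi6]
    · have hsub : Set.Ioo 0 (Real.pi / lam) ⊆
          Function.support (fun x => Real.sin (lam * x) ^ 6 / x ^ (4 - b)) ∩ Set.Ioi 0 := by
        rintro x ⟨hx0, hx1⟩
        have : 0 < Real.sin (lam * x) :=
          Real.sin_pos_of_pos_of_lt_pi (by positivity) (by rwa [lt_div_iff₀' hlam] at hx1)
        refine ⟨?_, hx0⟩
        rw [Function.mem_support]
        positivity
      refine lt_of_lt_of_le ?_ (measure_mono hsub)
      rw [Real.volume_Ioo, sub_zero, ENNReal.ofReal_pos]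
      have := Real.pi_pos
      positivity
    · refine (ae_restrict_iff' measurableSet_Ioi).2 (ae_of_all _ fun x hx => ?_)
      have : (0 : ℝ) < x := hx
      simp only [Pi.zero_apply]
      positivity
  -- otherwise the closed form `hv6` of the positive integral in `hpos` would vanish
  have hD6 : -15 + 6 * (2 : ℝ) ^ (3 - b) - 3 ^ (3 - b) ≠ 0 := by
    intro h
    have : -15 / 32 + 6 / 32 * (2 : ℝ) ^ (3 - b) + -1 / 32 * 3 ^ (3 - b) = 0 := by linarith
    rw [hv6, this, mul_zero, zero_div] at hpos
    exact lt_irrefl _ hpos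
  have hD4 : (2 : ℝ) ^ (1 - b) - 1 ≠ 0 := by
    have := Real.one_lt_rpow (x := 2) (by norm_num) (show 0 < 1 - b by linarith)
    linarith
  have h2 : (2 : ℝ) ^ (3 - b) = 4 * 2 ^ (1 - b) := by
    rw [show 3 - b = 1 - b + (2 : ℕ) by push_cast; ring, Real.rpow_add_natCast (by norm_num)]
    ring
  have E4 : 1 / (2 ^ (1 - b) - 1) * (∫ x in Set.Ioi (0 : ℝ), Real.sin (lam * x) ^ 4 / x ^ (4 - b)) =
      2 ^ (3 - b) * lam ^ (3 - b) * Real.pi /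
        (4 * Real.Gamma (4 - b) * Real.sin ((1 - b) * Real.pi / 2)) := by
    rw [hv4, Real.mul_rpow (by norm_num) hlam.le, h2]
    field_simp
    ring
  have E6 : 16 / (-15 + 6 * 2 ^ (3 - b) - 3 ^ (3 - b)) *
        (∫ x in Set.Ioi (0 : ℝ), Real.sin (lam * x) ^ 6 / x ^ (4 - b)) =
      2 ^ (3 - b) * lam ^ (3 - b) * Real.pi /
        (4 * Real.Gamma (4 - b) * Real.sin ((1 - b) * Real.pi / 2)) := by
    rw [hv6, Real.mul_rpow (by norm_num) hlam.le]
    field_simp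
    ring
  exact ⟨_, _, intervalIntegral_tendsto_integral_Ioi 0 hi4 tendsto_id,
    intervalIntegral_tendsto_integral_Ioi 0 hi6 tendsto_id, E4.trans E6.symm, E4⟩
end

section
/- For every real number λ > 0 and every b ∈ (1,3), the integrals ∫₀^∞ sin⁴(λx)/x^{4−b} dx and ∫₀^∞ sin⁶(λx)/x^{4−b} dx converge and satisfy (1/(1 − 2^{1−b})) · ∫₀^∞ sin⁴(λx)/x^{4−b} dx = (16/(15 − 6·2^{3−b} + 3^{3−b})) · ∫₀^∞ sin⁶(λx)/x^{4−b} dx = 2^{3−b} λ^{3−b} π / (4 Γ(4−b) sin((3−b)π/2)). -/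
/-!
The value of both integrals comes from one classical formula: for `1 < p < 3` and `c > 0`,
`∫₀^∞ (1 - cos (c x)) x^{-p} dx = c^{p-1} π / (2 Γ(p) sin ((p-1)π/2))`
(`one_sub_cos_scaled`), applied with `p = 4 - b` to the power reductions
`8 sin⁴ y = 4 (1 - cos 2y) - (1 - cos 4y)` and
`32 sin⁶ y = 15 (1 - cos 2y) - 6 (1 - cos 4y) + (1 - cos 6y)`.

The formula itself follows from two applications of Tonelli's theorem (`tonelli_Ioi`).
Inserting `Γ(p) x^{-p} = ∫₀^∞ t^{p-1} e^{-xt} dt` and integrating in `x` first, with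
`∫₀^∞ (1 - cos x) e^{-tx} dx = 1/t - t/(t²+1)`, reduces it to `∫₀^∞ t^{p-2}/(1+t²) dt`.
Inserting `1/(1+t²) = ∫₀^∞ e^{-y(1+t²)} dy` there and integrating in `t` first gives
`Γ((p-1)/2) Γ((3-p)/2) / 2`, which Euler's reflection formula evaluates.

The denominator `15 - 6·2^{3-b} + 3^{3-b}` does not vanish, because it is a positive multiple of the
integral of the nonnegative function `sin⁶(λx)/x^{4-b}`, which is positive on an interval.
-/

open MeasureTheory Filter Set

/-- Tonelli's theorem on `(0, ∞)²` for a nonnegative function whose sections in both directions have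
known integrals `F` and `G`: integrability of `F` gives integrability of `G` and `∫ G = ∫ F`. -/
lemma tonelli_Ioi (f : ℝ → ℝ → ℝ) (F G : ℝ → ℝ) (hm : Measurable (Function.uncurry f))
    (hf : ∀ x > 0, ∀ y > 0, 0 ≤ f x y)
    (h1 : ∀ x > 0, IntegrableOn (f x) (Ioi 0)) (hF : ∀ x > 0, ∫ y in Ioi 0, f x y = F x)
    (hG : ∀ y > 0, ∫ x in Ioi 0, f x y = G y) (hFi : IntegrableOn F (Ioi 0)) :
    IntegrableOn G (Ioi 0) ∧ ∫ y in Ioi 0, G y = ∫ x in Ioi 0, F x := by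
  have hi : Integrable (Function.uncurry f)
      ((volume.restrict (Ioi (0 : ℝ))).prod (volume.restrict (Ioi (0 : ℝ)))) := by
    rw [integrable_prod_iff hm.aestronglyMeasurable]
    refine ⟨(ae_restrict_iff' measurableSet_Ioi).2 (Eventually.of_forall h1), ?_⟩
    refine hFi.congr_fun (fun x hx => ?_) measurableSet_Ioi
    rw [← hF x hx]
    refine setIntegral_congr_fun measurableSet_Ioi (fun y hy => ?_)
    simp only [Function.uncurry]
    rw [Real.norm_of_nonneg (hf x hx y hy)]
  have e1 : ∫ x in Ioi 0, F x = ∫ x in Ioi 0, ∫ y in Ioi 0, f x y :=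
    setIntegral_congr_fun measurableSet_Ioi (fun x hx => (hF x hx).symm)
  have e2 : ∫ y in Ioi 0, G y = ∫ y in Ioi 0, ∫ x in Ioi 0, f x y :=
    setIntegral_congr_fun measurableSet_Ioi (fun x hx => (hG x hx).symm)
  refine ⟨IntegrableOn.congr_fun (f := fun y => ∫ x in Ioi 0, f x y) hi.integral_prod_right
    (fun y hy => hG y hy) measurableSet_Ioi, ?_⟩
  rw [e1, e2]
  exact (integral_integral_swap hi).symm

/-- The Mellin transform of `1/(1+t²)` at `p - 1`, from `1/(1+t²) = ∫₀^∞ e^{-y(1+t²)} dy` and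
`Γ(s) Γ(1-s) = π / sin (π s)` with `s = (p-1)/2`. -/
lemma mellin_one_add_sq (p : ℝ) (h1 : 1 < p) (h3 : p < 3) :
    IntegrableOn (fun t : ℝ => t ^ (p - 2) / (1 + t ^ 2)) (Ioi 0) ∧
    ∫ t in Ioi (0 : ℝ), t ^ (p - 2) / (1 + t ^ 2)
      = Real.pi / (2 * Real.sin ((p - 1) * Real.pi / 2)) := by
  have hs : 0 < (3 - p) / 2 := by linarith
  have key := tonelli_Ioi (fun y t => t ^ (p - 2) * Real.exp (-y * (1 + t ^ 2)))
    (fun y => (Real.exp (-y) * y ^ ((3 - p) / 2 - 1)) * ((1 / 2) * Real.Gamma ((p - 1) / 2)))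
    (fun t => t ^ (p - 2) / (1 + t ^ 2))
    (by unfold Function.uncurry; fun_prop)
    (fun y hy t ht => mul_nonneg (Real.rpow_nonneg (le_of_lt ht) _) (Real.exp_nonneg _))
    ?_ ?_ ?_ ((Real.GammaIntegral_convergent hs).mul_const _)
  · refine ⟨key.1, key.2.trans ?_⟩
    rw [integral_mul_const, ← Real.Gamma_eq_integral hs]
    have h := Real.Gamma_mul_Gamma_one_sub ((p - 1) / 2)
    rw [show 1 - (p - 1) / 2 = (3 - p) / 2 by ring,
      show Real.pi * ((p - 1) / 2) = (p - 1) * Real.pi / 2 by ring] at h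
    calc _ = (1 / 2) * (Real.Gamma ((p - 1) / 2) * Real.Gamma ((3 - p) / 2)) := by ring
      _ = _ := by rw [h]; ring
  · intro y hy
    refine IntegrableOn.congr_fun ((integrableOn_rpow_mul_exp_neg_mul_sq (s := p - 2) hy
      (by linarith)).const_mul (Real.exp (-y))) (fun t ht => ?_) measurableSet_Ioi
    rw [show -y * (1 + t ^ 2) = -y + -y * t ^ 2 by ring, Real.exp_add]
    ring
  · intro y hy
    have h := integral_rpow_mul_exp_neg_mul_rpow (p := 2) (q := p - 2) (b := y) two_pos
      (by linarith) hy
    have e : ∫ t in Ioi (0 : ℝ), t ^ (p - 2) * Real.exp (-y * (1 + t ^ 2))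
        = Real.exp (-y) * ∫ t in Ioi (0 : ℝ), t ^ (p - 2) * Real.exp (-y * t ^ (2 : ℝ)) := by
      rw [← integral_const_mul]
      refine setIntegral_congr_fun measurableSet_Ioi (fun t ht => ?_)
      simp only [Real.rpow_two]
      rw [show -y * (1 + t ^ 2) = -y + -y * t ^ 2 by ring, Real.exp_add]
      ring
    rw [e, h, show -(p - 2 + 1) / 2 = (3 - p) / 2 - 1 by ring,
      show (p - 2 + 1) / 2 = (p - 1) / 2 by ring]
    ring
  · intro t ht
    have h : 0 < 1 + t ^ 2 := by positivity
    have e := integral_exp_mul_Ioi (a := -(1 + t ^ 2)) (by linarith) 0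
    rw [integral_const_mul]
    rw [show (fun y => Real.exp (-y * (1 + t ^ 2))) = fun y => Real.exp (-(1 + t ^ 2) * y) from
      funext fun y => by ring_nf, e, neg_div_neg_eq, mul_zero, Real.exp_zero, mul_one_div]

/-- The Laplace transform of `1 - cos`; the cosine part is the real part of the transform of
`e^{ix}`. -/
lemma laplace_one_sub_cos (t : ℝ) (ht : 0 < t) :
    IntegrableOn (fun x : ℝ => (1 - Real.cos x) * Real.exp (-x * t)) (Ioi 0) ∧
    ∫ x in Ioi (0 : ℝ), (1 - Real.cos x) * Real.exp (-x * t) = 1 / (t * (1 + t ^ 2)) := by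
  have ha : (-(t : ℂ) + Complex.I).re < 0 := by simpa using ht
  have hi := integrableOn_exp_mul_complex_Ioi ha 0
  have he := integral_exp_mul_complex_Ioi ha 0
  have hi0 := integrableOn_exp_mul_Ioi (a := -t) (by linarith) 0
  have he0 := integral_exp_mul_Ioi (a := -t) (by linarith) 0
  have hre : ∀ x : ℝ, RCLike.re (Complex.exp ((-(t : ℂ) + Complex.I) * x))
      = Real.cos x * Real.exp (-x * t) := by
    intro x
    simp [Complex.exp_re]
    ring_nf
  have hic : IntegrableOn (fun x : ℝ => Real.cos x * Real.exp (-x * t)) (Ioi 0) := by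
    have := hi.re
    simp only [hre] at this
    exact this
  have hec : ∫ x in Ioi (0 : ℝ), Real.cos x * Real.exp (-x * t) = t / (1 + t ^ 2) := by
    have := integral_re hi
    simp only [hre] at this
    rw [this, he]
    have hn : (1 + t ^ 2) ≠ 0 := by positivity
    simp [Complex.div_re, Complex.normSq_apply]
    field_simp
    ring
  have ee : (fun x : ℝ => (1 - Real.cos x) * Real.exp (-x * t))
      = fun x => Real.exp (-t * x) - Real.cos x * Real.exp (-x * t) := by
    funext x
    rw [show -t * x = -x * t by ring]
    ring
  rw [ee]
  refine ⟨hi0.sub hic, ?_⟩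
  rw [integral_sub hi0 hic, he0, hec]
  have hn : (1 + t ^ 2) ≠ 0 := by positivity
  simp
  field_simp
  ring

/-- The case `c = 1` of `one_sub_cos_scaled`, from `Γ(p) x^{-p} = ∫₀^∞ t^{p-1} e^{-xt} dt`. -/
lemma one_sub_cos (p : ℝ) (h1 : 1 < p) (h3 : p < 3) :
    IntegrableOn (fun x : ℝ => (1 - Real.cos x) / x ^ p) (Ioi 0) ∧
    ∫ x in Ioi (0 : ℝ), (1 - Real.cos x) / x ^ p
      = Real.pi / (2 * Real.Gamma p * Real.sin ((p - 1) * Real.pi / 2)) := by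
  have hp : 0 < p := by linarith
  have hΓ := Real.Gamma_pos_of_pos hp
  obtain ⟨mi, me⟩ := mellin_one_add_sq p h1 h3
  have key := tonelli_Ioi
    (fun t x => t ^ (p - 1) * ((1 - Real.cos x) * Real.exp (-x * t)))
    (fun t => t ^ (p - 2) / (1 + t ^ 2))
    (fun x => Real.Gamma p * ((1 - Real.cos x) / x ^ p))
    (by unfold Function.uncurry; fun_prop)
    (fun t ht x hx => mul_nonneg (Real.rpow_nonneg (le_of_lt ht) _)
      (mul_nonneg (by linarith [Real.cos_le_one x]) (Real.exp_nonneg _)))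
    (fun t ht => (laplace_one_sub_cos t ht).1.const_mul _)
    ?_ ?_ mi
  · constructor
    · refine IntegrableOn.congr_fun (key.1.const_mul (Real.Gamma p)⁻¹) (fun x _ => ?_)
        measurableSet_Ioi
      field_simp
    · have h := key.2
      rw [me, integral_const_mul] at h
      rw [eq_div_of_mul_eq hΓ.ne' ((mul_comm _ _).trans h), div_div]
      ring_nf
  · intro t ht
    rw [integral_const_mul, (laplace_one_sub_cos t ht).2,
      show p - 1 = (p - 2) + 1 by ring, Real.rpow_add_one (ne_of_gt ht)]
    have : 0 < t := ht
    have hn : (1 + t ^ 2) ≠ 0 := by positivity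
    field_simp
  · intro x hx
    have h := Real.integral_rpow_mul_exp_neg_mul_Ioi hp hx
    rw [show (fun t : ℝ => t ^ (p - 1) * ((1 - Real.cos x) * Real.exp (-x * t)))
      = fun t => (1 - Real.cos x) * (t ^ (p - 1) * Real.exp (-(x * t))) from
        funext fun t => by rw [neg_mul]; ring, integral_const_mul, h,
      Real.div_rpow zero_le_one (le_of_lt hx), Real.one_rpow]
    ring

lemma one_sub_cos_scaled (p c : ℝ) (h1 : 1 < p) (h3 : p < 3) (hc : 0 < c) :
    IntegrableOn (fun x : ℝ => (1 - Real.cos (c * x)) / x ^ p) (Ioi 0) ∧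
    ∫ x in Ioi (0 : ℝ), (1 - Real.cos (c * x)) / x ^ p
      = c ^ (p - 1) * (Real.pi / (2 * Real.Gamma p * Real.sin ((p - 1) * Real.pi / 2))) := by
  obtain ⟨hi, he⟩ := one_sub_cos p h1 h3
  have hcp : 0 < c ^ p := Real.rpow_pos_of_pos hc p
  have heq : EqOn (fun x : ℝ => c ^ p * ((1 - Real.cos (c * x)) / (c * x) ^ p))
      (fun x : ℝ => (1 - Real.cos (c * x)) / x ^ p) (Ioi 0) := by
    intro x hx
    have hxp : 0 < x ^ p := Real.rpow_pos_of_pos hx p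
    simp only []
    rw [Real.mul_rpow hc.le (le_of_lt hx)]
    field_simp
  constructor
  · refine IntegrableOn.congr_fun (Integrable.const_mul ?_ (c ^ p)) heq measurableSet_Ioi
    have := (integrableOn_Ioi_comp_mul_left_iff
      (fun x : ℝ => (1 - Real.cos x) / x ^ p) 0 hc).2 (by simpa using hi)
    exact this
  · rw [← setIntegral_congr_fun measurableSet_Ioi heq, integral_const_mul,
      integral_comp_mul_left_Ioi (fun x : ℝ => (1 - Real.cos x) / x ^ p) 0 hc, mul_zero, he,
      smul_eq_mul, Real.rpow_sub_one hc.ne']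
    ring

lemma sin_pow_four (y : ℝ) : Real.sin y ^ 4
    = (1 / 2) * (1 - Real.cos (2 * y)) - (1 / 8) * (1 - Real.cos (4 * y)) := by
  have h4 : Real.cos (4 * y) = 2 * Real.cos (2 * y) ^ 2 - 1 := by
    rw [← Real.cos_two_mul]; ring_nf
  rw [h4, Real.cos_two_mul, show Real.sin y ^ 4 = (Real.sin y ^ 2) ^ 2 by ring, Real.sin_sq]
  ring

lemma sin_pow_six (y : ℝ) : Real.sin y ^ 6
    = (15 / 32) * (1 - Real.cos (2 * y)) - (6 / 32) * (1 - Real.cos (4 * y))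
      + (1 / 32) * (1 - Real.cos (6 * y)) := by
  have h4 : Real.cos (4 * y) = 2 * Real.cos (2 * y) ^ 2 - 1 := by
    rw [← Real.cos_two_mul]; ring_nf
  have h6 : Real.cos (6 * y) = 4 * Real.cos (2 * y) ^ 3 - 3 * Real.cos (2 * y) := by
    rw [← Real.cos_three_mul]; ring_nf
  rw [h4, h6, Real.cos_two_mul, show Real.sin y ^ 6 = (Real.sin y ^ 2) ^ 3 by ring, Real.sin_sq]
  ring

/-- Lemma 1.3 of Bardet–Dola: for `1 < b < 3` and `λ > 0`, the integrals
`∫₀^∞ sin⁴(λx)/x^{4-b} dx` and `∫₀^∞ sin⁶(λx)/x^{4-b} dx` converge and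
`(1/(1-2^{1-b})) ∫₀^∞ sin⁴(λx)/x^{4-b} dx
  = (16/(15-6·2^{3-b}+3^{3-b})) ∫₀^∞ sin⁶(λx)/x^{4-b} dx
  = 2^{3-b} λ^{3-b} π /(4 Γ(4-b) sin((3-b)π/2))`. -/
theorem stmt_2 (lam b : ℝ) (hlam : 0 < lam) (hb : b ∈ Set.Ioo (1 : ℝ) 3) :
    ∃ I₄ I₆ : ℝ,
      Tendsto (fun T : ℝ => ∫ x in (0 : ℝ)..T, Real.sin (lam * x) ^ 4 / x ^ (4 - b))
        atTop (nhds I₄) ∧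
      Tendsto (fun T : ℝ => ∫ x in (0 : ℝ)..T, Real.sin (lam * x) ^ 6 / x ^ (4 - b))
        atTop (nhds I₆) ∧
      1 / (1 - 2 ^ (1 - b)) * I₄ = 16 / (15 - 6 * 2 ^ (3 - b) + 3 ^ (3 - b)) * I₆ ∧
      1 / (1 - 2 ^ (1 - b)) * I₄ =
        2 ^ (3 - b) * lam ^ (3 - b) * Real.pi /
          (4 * Real.Gamma (4 - b) * Real.sin ((3 - b) * Real.pi / 2)) := by
  obtain ⟨hb1, hb3⟩ := hb
  have hp1 : 1 < 4 - b := by linarith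
  have hp3 : 4 - b < 3 := by linarith
  obtain ⟨i2, e2⟩ := one_sub_cos_scaled (4 - b) (2 * lam) hp1 hp3 (by positivity)
  obtain ⟨i4, e4⟩ := one_sub_cos_scaled (4 - b) (4 * lam) hp1 hp3 (by positivity)
  obtain ⟨i6, e6⟩ := one_sub_cos_scaled (4 - b) (6 * lam) hp1 hp3 (by positivity)
  set C : ℝ := Real.pi / (2 * Real.Gamma (4 - b) * Real.sin ((4 - b - 1) * Real.pi / 2)) with hC
  rw [show 4 - b - 1 = 3 - b by ring] at e2 e4 e6 hC
  rw [Real.mul_rpow (by norm_num) hlam.le] at e2 e4 e6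
  have r4 : (4 : ℝ) ^ (3 - b) = 2 ^ (3 - b) * 2 ^ (3 - b) := by
    rw [← Real.mul_rpow (by norm_num) (by norm_num)]; norm_num
  have r6 : (6 : ℝ) ^ (3 - b) = 2 ^ (3 - b) * 3 ^ (3 - b) := by
    rw [← Real.mul_rpow (by norm_num) (by norm_num)]; norm_num
  have r1 : (2 : ℝ) ^ (1 - b) = 2 ^ (3 - b) / 4 := by
    rw [show 1 - b = (3 - b) - (2 : ℝ) by ring, Real.rpow_sub two_pos]; norm_num
  have hlt : (2 : ℝ) ^ (1 - b) < 1 :=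
    Real.rpow_lt_one_of_one_lt_of_neg (by norm_num) (by linarith)
  have f4 : (fun x : ℝ => Real.sin (lam * x) ^ 4 / x ^ (4 - b))
      = fun x => (1 / 2) * ((1 - Real.cos (2 * lam * x)) / x ^ (4 - b))
        - (1 / 8) * ((1 - Real.cos (4 * lam * x)) / x ^ (4 - b)) := by
    funext x
    rw [sin_pow_four, ← mul_assoc, ← mul_assoc]
    ring
  have f6 : (fun x : ℝ => Real.sin (lam * x) ^ 6 / x ^ (4 - b))
      = fun x => (15 / 32) * ((1 - Real.cos (2 * lam * x)) / x ^ (4 - b))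
        - (6 / 32) * ((1 - Real.cos (4 * lam * x)) / x ^ (4 - b))
        + (1 / 32) * ((1 - Real.cos (6 * lam * x)) / x ^ (4 - b)) := by
    funext x
    rw [sin_pow_six, ← mul_assoc, ← mul_assoc, ← mul_assoc]
    ring
  have hi4 : IntegrableOn (fun x : ℝ => Real.sin (lam * x) ^ 4 / x ^ (4 - b)) (Ioi 0) := by
    rw [f4]
    exact (i2.const_mul _).sub (i4.const_mul _)
  have hi6 : IntegrableOn (fun x : ℝ => Real.sin (lam * x) ^ 6 / x ^ (4 - b)) (Ioi 0) := by
    rw [f6]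
    exact ((i2.const_mul _).sub (i4.const_mul _)).add (i6.const_mul _)
  have v4 : ∫ x in Ioi (0 : ℝ), Real.sin (lam * x) ^ 4 / x ^ (4 - b)
      = C * lam ^ (3 - b) * 2 ^ (3 - b) / 2 * (1 - 2 ^ (1 - b)) := by
    rw [f4, integral_sub (i2.const_mul _) (i4.const_mul _), integral_const_mul,
      integral_const_mul, e2, e4, r4, r1]
    ring
  have v6 : ∫ x in Ioi (0 : ℝ), Real.sin (lam * x) ^ 6 / x ^ (4 - b)
      = C * lam ^ (3 - b) * 2 ^ (3 - b) / 32 * (15 - 6 * 2 ^ (3 - b) + 3 ^ (3 - b)) := by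
    have h24 : IntegrableOn (fun x => (15 / 32) * ((1 - Real.cos (2 * lam * x)) / x ^ (4 - b))
        - (6 / 32) * ((1 - Real.cos (4 * lam * x)) / x ^ (4 - b))) (Ioi 0) :=
      (i2.const_mul _).sub (i4.const_mul _)
    rw [f6, integral_add h24 (i6.const_mul _),
      integral_sub (i2.const_mul _) (i4.const_mul _), integral_const_mul,
      integral_const_mul, integral_const_mul, e2, e4, e6, r4, r6]
    ring
  have pos6 : 0 < ∫ x in Ioi (0 : ℝ), Real.sin (lam * x) ^ 6 / x ^ (4 - b) := by
    rw [setIntegral_pos_iff_support_of_nonneg_ae _ hi6]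
    · -- `sin (lam * x)` is positive for `0 < x < π / lam`
      have hsub : Ioo 0 (Real.pi / lam) ⊆
          Function.support (fun x : ℝ => Real.sin (lam * x) ^ 6 / x ^ (4 - b)) ∩ Ioi 0 := by
        rintro x ⟨hx0, hx1⟩
        have hs : 0 < Real.sin (lam * x) := by
          apply Real.sin_pos_of_pos_of_lt_pi (by positivity)
          rw [lt_div_iff₀ hlam] at hx1
          linarith
        have := Real.rpow_pos_of_pos hx0 (4 - b)
        exact ⟨by simp only [Function.mem_support]; positivity, hx0⟩
      refine lt_of_lt_of_le ?_ (measure_mono hsub)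
      rw [Real.volume_Ioo, ENNReal.ofReal_pos, sub_zero]
      positivity
    · refine (ae_restrict_iff' measurableSet_Ioi).2 (Eventually.of_forall fun x hx => ?_)
      have := Real.rpow_pos_of_pos hx (4 - b)
      simp only [Pi.zero_apply]
      positivity
  have hD : 15 - 6 * (2 : ℝ) ^ (3 - b) + 3 ^ (3 - b) ≠ 0 := by
    intro h
    rw [v6, h, mul_zero] at pos6
    exact lt_irrefl _ pos6
  have hA : 1 - (2 : ℝ) ^ (1 - b) ≠ 0 := by linarith
  refine ⟨_, _, intervalIntegral_tendsto_integral_Ioi 0 hi4 tendsto_id,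
    intervalIntegral_tendsto_integral_Ioi 0 hi6 tendsto_id, ?_, ?_⟩
  · rw [v4, v6, div_mul_eq_mul_div, div_mul_eq_mul_div (16 : ℝ), div_eq_div_iff hA hD]
    ring
  · rw [v4, one_div, mul_comm _ (1 - _), inv_mul_cancel_left₀ hA, hC]
    ring
end

section
/- As m → ∞ one has J₄(1,m) = C'₄₁(1)·m² + O(log m), where C'₄₁(1) := 6/2 + 16·∫₀^1 sin⁴(y/2)/y³ dy + 2·∫₁^∞ (−4cos y + cos 2y)/y³ dy. -/
/-!
Put `F y = 16 sin⁴(y/2) / y³`. Since `16 sin⁴(y/2) = 6 - 8 cos y + 2 cos 2y`, splitting at `y = 1`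
gives `C41'one = ∫₀^∞ F` (`C41'one_eq`). Replacing `sin⁴(x/2)` in the denominator of the integrand
of `J4 1 m` by `(x/2)⁴` and substituting `y = mx` turns the integral into `m² ∫₀^{mπ} F`, which
differs from `m² ∫₀^∞ F` by `O(1)` because `0 ≤ F y ≤ 16 / y³`.

The replacement costs little: `1/sin⁴u - 1/u⁴ = O(1/u²)` on `(0, π/2]` (`inv_sin_pow_sub_le`), so
the error in the integrand is `O(sin⁴(mx/2) / x)`. As `sin⁴(t/2) ≤ min(1, t/2) ≤ 2t/(1+t)`, this is
`O(m / (1 + mx))`, whose integral over `[0, π]` is `O(log (1 + mπ)) = O(log m)`.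
-/


open MeasureTheory Filter Asymptotics

/-- `J₄(a,m) := ∫₀^π x^a sin⁴(mx/2)/sin⁴(x/2) dx`. -/
noncomputable def J4 (a : ℝ) (m : ℕ) : ℝ :=
  ∫ x in (0 : ℝ)..Real.pi, x ^ a * Real.sin (m * x / 2) ^ 4 / Real.sin (x / 2) ^ 4

/-- `C'₄₁(1) := 6/2 + 16 ∫₀^1 sin⁴(y/2)/y³ dy + 2 ∫₁^∞ (-4 cos y + cos 2y)/y³ dy`. -/
noncomputable def C41'one : ℝ :=
  6 / 2 + 16 * (∫ y in (0 : ℝ)..1, Real.sin (y / 2) ^ 4 / y ^ 3)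
    + 2 * (∫ y in Set.Ioi (1 : ℝ), (-4 * Real.cos y + Real.cos (2 * y)) / y ^ 3)

/-- The rescaled limiting integrand `F y = 16 sin⁴(y/2) / y³`, with the junk value `F 0 = 0`. -/
noncomputable def limitKernel (y : ℝ) : ℝ := 16 * (Real.sin (y / 2) ^ 4 / y ^ 3)

lemma sin_pow_four_le_one (u : ℝ) : Real.sin u ^ 4 ≤ 1 := by
  nlinarith [Real.sin_sq_le_one u, sq_nonneg (Real.sin u)]

lemma measurable_limitKernel : Measurable limitKernel := by
  unfold limitKernel; fun_prop

lemma limitKernel_nonneg {y : ℝ} (hy : 0 < y) : 0 ≤ limitKernel y := by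
  unfold limitKernel; positivity

lemma limitKernel_le {y : ℝ} (hy : 0 < y) : limitKernel y ≤ 16 * y ^ (-3 : ℝ) := by
  have h : y ^ (-3 : ℝ) = 1 / y ^ 3 := by
    rw [Real.rpow_neg hy.le, one_div]; norm_cast
  rw [h, limitKernel]
  gcongr
  exact sin_pow_four_le_one _

lemma limitKernel_le_self {y : ℝ} (hy : 0 < y) : limitKernel y ≤ y := by
  have h1 : Real.sin (y / 2) ^ 2 ≤ (y / 2) ^ 2 :=
    sq_le_sq.2 (by simpa using Real.abs_sin_le_abs (x := y / 2))
  have h : Real.sin (y / 2) ^ 4 ≤ (y / 2) ^ 4 := by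
    calc Real.sin (y / 2) ^ 4 = (Real.sin (y / 2) ^ 2) ^ 2 := by ring
      _ ≤ ((y / 2) ^ 2) ^ 2 := by gcongr
      _ = (y / 2) ^ 4 := by ring
  rw [limitKernel, mul_div_assoc', div_le_iff₀ (by positivity)]
  nlinarith

lemma integrableOn_Ioi_limitKernel {c : ℝ} (hc : 0 < c) :
    IntegrableOn limitKernel (Set.Ioi c) := by
  refine ((integrableOn_Ioi_rpow_of_lt (a := -3) (by norm_num) hc).const_mul 16).mono'
    measurable_limitKernel.aestronglyMeasurable ?_
  refine (ae_restrict_iff' measurableSet_Ioi).2 (.of_forall fun y hy => ?_)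
  have hy0 : 0 < y := hc.trans hy
  rw [Real.norm_of_nonneg (limitKernel_nonneg hy0)]
  exact limitKernel_le hy0

lemma intervalIntegrable_limitKernel {c : ℝ} (hc : 0 ≤ c) :
    IntervalIntegrable limitKernel volume 0 c := by
  refine (continuous_id.intervalIntegrable (μ := volume) 0 c).mono_fun'
    measurable_limitKernel.aestronglyMeasurable ?_
  rw [Set.uIoc_of_le hc]
  refine (ae_restrict_iff' measurableSet_Ioc).2 (.of_forall fun y hy => ?_)
  dsimp only
  rw [Real.norm_of_nonneg (limitKernel_nonneg hy.1)]
  exact limitKernel_le_self hy.1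

lemma integral_Ioi_limitKernel_nonneg {c : ℝ} (hc : 0 < c) :
    0 ≤ ∫ y in Set.Ioi c, limitKernel y :=
  setIntegral_nonneg measurableSet_Ioi fun _ hy => limitKernel_nonneg (hc.trans hy)

lemma integral_Ioi_limitKernel_le {c : ℝ} (hc : 0 < c) :
    ∫ y in Set.Ioi c, limitKernel y ≤ 8 / c ^ 2 := by
  have h3 : (-3 : ℝ) < -1 := by norm_num
  calc ∫ y in Set.Ioi c, limitKernel y
      ≤ ∫ y in Set.Ioi c, 16 * y ^ (-3 : ℝ) :=
        setIntegral_mono_on (integrableOn_Ioi_limitKernel hc)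
          ((integrableOn_Ioi_rpow_of_lt h3 hc).const_mul 16) measurableSet_Ioi
          fun _ hy => limitKernel_le (hc.trans hy)
    _ = 8 / c ^ 2 := by
        have h : c ^ (-3 + 1 : ℝ) = 1 / c ^ 2 := by
          rw [show (-3 + 1 : ℝ) = -2 by norm_num, Real.rpow_neg hc.le, one_div]; norm_cast
        rw [integral_const_mul, integral_Ioi_rpow_of_lt h3 hc, h]
        ring

/-- The constant of the theorem is `∫₀^∞ F`, split at `y = 1`; the summand `6 / 2` is
`∫₁^∞ 6 / y³`. -/
lemma C41'one_eq :
    C41'one = (∫ y in (0 : ℝ)..1, limitKernel y) + ∫ y in Set.Ioi (1 : ℝ), limitKernel y := by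
  have h3 : (-3 : ℝ) < -1 := by norm_num
  have hi := integrableOn_Ioi_rpow_of_lt h3 one_pos
  have hpow : ∀ y ∈ Set.Ioi (1 : ℝ), y ^ (-3 : ℝ) = 1 / y ^ 3 := fun y hy => by
    rw [Real.rpow_neg (zero_le_one.trans (le_of_lt hy)), one_div]; norm_cast
  have hosc : IntegrableOn (fun y : ℝ => (-4 * Real.cos y + Real.cos (2 * y)) / y ^ 3)
      (Set.Ioi 1) := by
    refine (hi.const_mul 5).mono'
      (Measurable.aestronglyMeasurable (by fun_prop)) ?_
    refine (ae_restrict_iff' measurableSet_Ioi).2 (.of_forall fun y hy => ?_)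
    have hy0 : (0 : ℝ) < y := one_pos.trans hy
    rw [hpow y hy, Real.norm_eq_abs, abs_div, abs_of_pos (pow_pos hy0 3), mul_one_div]
    gcongr
    rw [abs_le]
    constructor <;>
      linarith [Real.cos_le_one y, Real.neg_one_le_cos y, Real.cos_le_one (2 * y),
        Real.neg_one_le_cos (2 * y)]
  have key : ∫ y in Set.Ioi (1 : ℝ), limitKernel y
      = 3 + 2 * ∫ y in Set.Ioi (1 : ℝ), (-4 * Real.cos y + Real.cos (2 * y)) / y ^ 3 := by
    calc ∫ y in Set.Ioi (1 : ℝ), limitKernel y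
        = ∫ y in Set.Ioi (1 : ℝ), (6 * y ^ (-3 : ℝ)
            + 2 * ((-4 * Real.cos y + Real.cos (2 * y)) / y ^ 3)) := by
          refine setIntegral_congr_fun measurableSet_Ioi fun y hy => ?_
          have hc : Real.cos y = 1 - 2 * Real.sin (y / 2) ^ 2 := by
            rw [show y = 2 * (y / 2) by ring, Real.cos_two_mul, Real.cos_sq']
            ring_nf
          rw [hpow y hy, Real.cos_two_mul, hc, limitKernel]
          ring
      _ = _ := by
          rw [integral_add (hi.const_mul 6) (hosc.const_mul 2), integral_const_mul,
            integral_const_mul, integral_Ioi_rpow_of_lt h3 one_pos]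
          norm_num
  rw [key, C41'one]
  simp only [limitKernel, intervalIntegral.integral_const_mul]
  ring

lemma C41'one_eq_add {c : ℝ} (hc : 0 < c) :
    C41'one = (∫ y in (0 : ℝ)..c, limitKernel y) + ∫ y in Set.Ioi c, limitKernel y := by
  rw [C41'one_eq, intervalIntegral.integral_interval_add_Ioi'
      (intervalIntegrable_limitKernel zero_le_one) (integrableOn_Ioi_limitKernel one_pos),
    intervalIntegral.integral_interval_add_Ioi'
      (intervalIntegrable_limitKernel hc.le) (integrableOn_Ioi_limitKernel hc)]

/-- Combines `u - sin u ≤ u³/6` in the numerator with Jordan's inequality `sin u ≥ 2u/π ≥ u/2` in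
the denominator. -/
lemma inv_sin_pow_sub_le {u : ℝ} (hu : 0 < u) (hu' : u ≤ Real.pi / 2) :
    0 ≤ 1 / Real.sin u ^ 4 - 1 / u ^ 4 ∧ 1 / Real.sin u ^ 4 - 1 / u ^ 4 ≤ 16 / u ^ 2 := by
  have h1 : Real.sin u ≤ u := Real.sin_le hu.le
  have h2 : u - u ^ 3 / 6 < Real.sin u := Real.sin_gt_sub_cube hu
  have h3 : u / 2 ≤ Real.sin u := by
    refine le_trans ?_ (Real.mul_le_sin hu.le hu')
    have : (1 : ℝ) / 2 ≤ 2 / Real.pi := by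
      rw [div_le_div_iff₀ two_pos Real.pi_pos]; linarith [Real.pi_le_four]
    nlinarith
  set s := Real.sin u
  have hs : 0 < s := by linarith
  constructor
  · rw [sub_nonneg]
    gcongr
  · have hnum : u ^ 4 - s ^ 4 ≤ u ^ 6 := by
      calc u ^ 4 - s ^ 4 = (u - s) * ((u + s) * (u ^ 2 + s ^ 2)) := by ring
        _ ≤ (u ^ 3 / 6) * ((u + u) * (u ^ 2 + u ^ 2)) := by
          gcongr
          linarith
        _ ≤ u ^ 6 := by nlinarith [pow_pos hu 6]
    have hden : u ^ 4 ≤ 16 * s ^ 4 := by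
      calc u ^ 4 = 16 * (u / 2) ^ 4 := by ring
        _ ≤ 16 * s ^ 4 := by gcongr
    rw [div_sub_div _ _ (by positivity) (by positivity), div_le_div_iff₀ (by positivity)
      (by positivity)]
    calc (1 * u ^ 4 - s ^ 4 * 1) * u ^ 2 ≤ u ^ 6 * u ^ 2 := by gcongr; linarith
      _ = u ^ 4 * u ^ 4 := by ring
      _ ≤ 16 * s ^ 4 * u ^ 4 := by gcongr
      _ = 16 * (s ^ 4 * u ^ 4) := by ring

/-- A single majorant replacing the two bounds `1` and `t / 2`. -/
lemma sin_half_pow_le {t : ℝ} (ht : 0 ≤ t) : Real.sin (t / 2) ^ 4 ≤ 2 * t / (1 + t) := by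
  have h1 := sin_pow_four_le_one (t / 2)
  have h2 : Real.sin (t / 2) ^ 4 ≤ t / 2 := by
    have ha : |Real.sin (t / 2)| ≤ t / 2 := by
      have := Real.abs_sin_le_abs (x := t / 2)
      rwa [abs_of_nonneg (by positivity : 0 ≤ t / 2)] at this
    calc Real.sin (t / 2) ^ 4 = |Real.sin (t / 2)| ^ 4 := (Even.pow_abs (by decide) _).symm
      _ ≤ |Real.sin (t / 2)| := pow_le_of_le_one (abs_nonneg _) (Real.abs_sin_le_one _) (by norm_num)
      _ ≤ t / 2 := ha
  rw [le_div_iff₀ (by positivity)]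
  nlinarith

/-- The error in the integrand of `J4 1 m` caused by replacing `sin⁴(x/2)` by `(x/2)⁴`. -/
noncomputable def integrandError (m : ℕ) (x : ℝ) : ℝ :=
  x ^ (1 : ℝ) * Real.sin (m * x / 2) ^ 4 / Real.sin (x / 2) ^ 4 - (m : ℝ) ^ 3 * limitKernel (m * x)

lemma norm_integrandError_le {m : ℕ} (hm : 0 < m) {x : ℝ} (hx : 0 < x) (hx' : x ≤ Real.pi) :
    ‖integrandError m x‖ ≤ 128 * (m / (1 + m * x)) := by
  have hm' : (0 : ℝ) < m := by exact_mod_cast hm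
  obtain ⟨h0, h1⟩ := inv_sin_pow_sub_le (u := x / 2) (by positivity) (by linarith)
  have h2 := sin_half_pow_le (t := m * x) (by positivity)
  have he : integrandError m x
      = x * Real.sin (m * x / 2) ^ 4 * (1 / Real.sin (x / 2) ^ 4 - 1 / (x / 2) ^ 4) := by
    rw [integrandError, limitKernel, Real.rpow_one]
    field_simp
    norm_num
  rw [he, Real.norm_of_nonneg (by positivity)]
  calc _ ≤ x * (2 * (m * x) / (1 + m * x)) * (16 / (x / 2) ^ 2) := by gcongr
    _ = 128 * (m / (1 + m * x)) := by field_simp; norm_num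

lemma intervalIntegrable_majorant (m : ℕ) :
    IntervalIntegrable (fun x : ℝ => 128 * ((m : ℝ) / (1 + m * x))) volume 0 Real.pi := by
  refine ContinuousOn.intervalIntegrable (ContinuousOn.mul continuousOn_const
    (ContinuousOn.div continuousOn_const (by fun_prop) fun x hx => ?_))
  rw [Set.uIcc_of_le Real.pi_pos.le] at hx
  have := hx.1
  positivity

lemma integral_majorant (m : ℕ) :
    ∫ x in (0 : ℝ)..Real.pi, 128 * ((m : ℝ) / (1 + m * x)) = 128 * Real.log (1 + m * Real.pi) := by
  rw [intervalIntegral.integral_eq_sub_of_hasDerivAt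
    (f := fun x => 128 * Real.log (1 + m * x)) ?_ (intervalIntegrable_majorant m)]
  · simp
  · intro x hx
    rw [Set.uIcc_of_le Real.pi_pos.le] at hx
    have h0 : 0 ≤ x := hx.1
    have h1 : HasDerivAt (fun x : ℝ => 1 + m * x) (m : ℝ) x := by
      simpa using ((hasDerivAt_id x).const_mul (m : ℝ)).const_add 1
    exact (h1.log (by positivity)).const_mul 128

lemma intervalIntegrable_integrandError {m : ℕ} (hm : 0 < m) :
    IntervalIntegrable (integrandError m) volume 0 Real.pi := by
  have hmeas : Measurable (integrandError m) := by
    unfold integrandError limitKernel; fun_prop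
  refine (intervalIntegrable_majorant m).mono_fun' hmeas.aestronglyMeasurable ?_
  rw [Set.uIoc_of_le Real.pi_pos.le]
  exact (ae_restrict_iff' measurableSet_Ioc).2
    (.of_forall fun x hx => norm_integrandError_le hm hx.1 hx.2)

lemma J4_one_eq {m : ℕ} (hm : 0 < m) :
    J4 1 m = (m : ℝ) ^ 2 * (∫ y in (0 : ℝ)..m * Real.pi, limitKernel y)
      + ∫ x in (0 : ℝ)..Real.pi, integrandError m x := by
  have hm' : (0 : ℝ) < m := by exact_mod_cast hm
  have hi : IntervalIntegrable (fun x : ℝ => (m : ℝ) ^ 3 * limitKernel (m * x)) volume 0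
      Real.pi := by
    have h := (intervalIntegrable_limitKernel
      (by positivity : 0 ≤ (m : ℝ) * Real.pi)).comp_mul_left (c := (m : ℝ))
    rw [zero_div, mul_div_cancel_left₀ _ hm'.ne'] at h
    exact h.const_mul _
  have hs := intervalIntegral.mul_integral_comp_mul_left (a := 0) (b := Real.pi)
    (f := limitKernel) (m : ℝ)
  rw [mul_zero] at hs
  calc J4 1 m = ∫ x in (0 : ℝ)..Real.pi,
        ((m : ℝ) ^ 3 * limitKernel (m * x) + integrandError m x) := by
        rw [J4]; congr 1; ext x; rw [integrandError]; ring
    _ = _ := by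
        rw [intervalIntegral.integral_add hi (intervalIntegrable_integrandError hm),
          intervalIntegral.integral_const_mul, ← hs]
        ring

/-- `J₄(1,m) = C'₄₁(1) m² + O(log m)` as the integer `m → ∞`. -/
theorem stmt_5 :
    (fun m : ℕ => J4 1 m - C41'one * (m : ℝ) ^ 2)
      =O[atTop] fun m : ℕ => Real.log m := by
  -- `528 = 128 * 4 + 16`, from `hlog` and `hlog2` below
  refine IsBigO.of_bound 528 ?_
  filter_upwards [eventually_ge_atTop 2] with m hm
  have hm0 : 0 < m := by omega
  have hm2 : (2 : ℝ) ≤ m := by exact_mod_cast hm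
  have hpi := Real.pi_gt_three
  have hc : 0 < (m : ℝ) * Real.pi := by positivity
  have herr : ‖∫ x in (0 : ℝ)..Real.pi, integrandError m x‖
      ≤ 128 * Real.log (1 + m * Real.pi) := by
    rw [← integral_majorant]
    exact intervalIntegral.norm_integral_le_of_norm_le Real.pi_pos.le
      (.of_forall fun x hx => norm_integrandError_le hm0 hx.1 hx.2)
      (intervalIntegrable_majorant m)
  have htail0 := integral_Ioi_limitKernel_nonneg hc
  have htail : (m : ℝ) ^ 2 * (∫ y in Set.Ioi ((m : ℝ) * Real.pi), limitKernel y) ≤ 1 := by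
    calc _ ≤ (m : ℝ) ^ 2 * (8 / (m * Real.pi) ^ 2) := by
          gcongr
          exact integral_Ioi_limitKernel_le hc
      _ = 8 / Real.pi ^ 2 := by field_simp
      _ ≤ 1 := by
          rw [div_le_one (by positivity)]
          nlinarith
  have hlog : Real.log (1 + m * Real.pi) ≤ 4 * Real.log m := by
    rw [show 4 * Real.log m = Real.log ((m : ℝ) ^ 4) by rw [Real.log_pow]; norm_num]
    refine Real.log_le_log (by positivity) ?_
    have h3 : (2 : ℝ) ^ 3 ≤ (m : ℝ) ^ 3 := by gcongr
    nlinarith [Real.pi_le_four]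
  have hlog2 : 1 ≤ 16 * Real.log m := by
    have := Real.log_le_log two_pos hm2
    linarith [Real.log_two_gt_d9]
  have hdiff : J4 1 m - C41'one * (m : ℝ) ^ 2
      = (∫ x in (0 : ℝ)..Real.pi, integrandError m x)
        - (m : ℝ) ^ 2 * ∫ y in Set.Ioi ((m : ℝ) * Real.pi), limitKernel y := by
    rw [J4_one_eq hm0, C41'one_eq_add hc]
    ring
  rw [hdiff]
  calc _ ≤ 128 * Real.log (1 + m * Real.pi) + 1 := by
        refine (norm_sub_le _ _).trans (add_le_add herr ?_)
        rwa [Real.norm_of_nonneg (by positivity)]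
    _ ≤ 528 * Real.log m := by linarith
    _ ≤ 528 * ‖Real.log m‖ := by
        gcongr
        exact Real.le_norm_self _
end

section
/- As m → ∞ one has J₆(1,m) = C'₆₁(1)·m² + O(log m), where C'₆₁(1) := 5/2 + 16·∫₀^1 sin⁶(y/2)/y³ dy + (1/2)·∫₁^∞ (−15cos y + 6cos 2y − cos 3y)/y³ dy. -/
/-!
Write `F y = sin⁶(y/2)/y³`. The expansion `32 sin⁶(y/2) = 10 - 15 cos y + 6 cos 2y - cos 3y`,
together with `∫₁^∞ y⁻³ = 1/2`, shows that the constant is `16 ∫₀^∞ F` (`C61'one_eq`).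

Near `0` the kernel `1/sin⁴(x/2)` behaves like `16/x⁴`, and on `(0, π]` the difference lies between
`0` and `256/x²` (`kernel_diff`). Replacing the kernel by `16/x⁴` turns `J₆(1,m)` into
`16 m² ∫₀^{mπ} F` by the substitution `y = mx`. The cost of this replacement is at most
`256 ∫₀^π sin⁶(mx/2)/x dx ≤ 256 (1 + log (mπ))`, by bounding the integrand by `m` on `[0, 1/m]` and by
`1/x` on `[1/m, π]`. The missing tail `16 m² ∫_{mπ}^∞ F` is bounded, since `F y ≤ y⁻³`.
-/

open MeasureTheory Filter Asymptotics

/-- `J₆(a,m) := ∫₀^π x^a sin⁶(mx/2)/sin⁴(x/2) dx`. -/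
noncomputable def J6 (a : ℝ) (m : ℕ) : ℝ :=
  ∫ x in (0 : ℝ)..Real.pi, x ^ a * Real.sin (m * x / 2) ^ 6 / Real.sin (x / 2) ^ 4

/-- `C'₆₁(1) := 5/2 + 16 ∫₀^1 sin⁶(y/2)/y³ dy + (1/2) ∫₁^∞ (-15 cos y + 6 cos 2y - cos 3y)/y³ dy`. -/
noncomputable def C61'one : ℝ :=
  5 / 2 + 16 * (∫ y in (0 : ℝ)..1, Real.sin (y / 2) ^ 6 / y ^ 3)
    + 1 / 2 * (∫ y in Set.Ioi (1 : ℝ),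
        (-15 * Real.cos y + 6 * Real.cos (2 * y) - Real.cos (3 * y)) / y ^ 3)

/-- The profile `sin⁶(y/2)/y³`, with the junk value `0` at `y = 0`. -/
noncomputable def profile (y : ℝ) : ℝ := Real.sin (y / 2) ^ 6 / y ^ 3

lemma sin_pow_six_le_one (t : ℝ) : Real.sin t ^ 6 ≤ 1 := by
  have h := pow_le_one₀ (n := 3) (sq_nonneg _) (Real.sin_sq_le_one t)
  calc Real.sin t ^ 6 = (Real.sin t ^ 2) ^ 3 := by ring
    _ ≤ 1 := h

lemma sin_pow_six_nonneg (t : ℝ) : 0 ≤ Real.sin t ^ 6 := by positivity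

/-- Since `|sin| ≤ 1`, a sixth power of the sine is at most any lower power of its argument. -/
lemma sin_pow_six_le_pow {t : ℝ} (ht : 0 ≤ t) {k : ℕ} (hk : k ≤ 6) : Real.sin t ^ 6 ≤ t ^ k := by
  have h1 : |Real.sin t| ≤ 1 := Real.abs_sin_le_one t
  have h2 : |Real.sin t| ≤ t := by
    have := Real.abs_sin_le_abs (x := t)
    rwa [abs_of_nonneg ht] at this
  calc Real.sin t ^ 6 = |Real.sin t| ^ 6 := by
        rw [← abs_pow, abs_of_nonneg (sin_pow_six_nonneg t)]
    _ ≤ |Real.sin t| ^ k := pow_le_pow_of_le_one (abs_nonneg _) h1 hk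
    _ ≤ t ^ k := pow_le_pow_left₀ (abs_nonneg _) h2 k

lemma sin_six_expand (y : ℝ) :
    32 * Real.sin (y / 2) ^ 6
      = 10 + (-15 * Real.cos y + 6 * Real.cos (2 * y) - Real.cos (3 * y)) := by
  have hs : Real.sin (y / 2) ^ 2 = 1 / 2 - Real.cos y / 2 := by
    have := Real.sin_sq_eq_half_sub (y / 2)
    rwa [mul_div_cancel₀ y two_ne_zero] at this
  have : Real.sin (y / 2) ^ 6 = (Real.sin (y / 2) ^ 2) ^ 3 := by ring
  rw [this, hs, Real.cos_two_mul, Real.cos_three_mul]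
  ring

lemma profile_nonneg {y : ℝ} (hy : 0 ≤ y) : 0 ≤ profile y := by
  unfold profile; positivity

lemma profile_le {y : ℝ} (hy : 0 < y) : profile y ≤ y ^ (-3 : ℝ) := by
  have : y ^ (-3 : ℝ) = 1 / y ^ 3 := by
    rw [Real.rpow_neg hy.le, one_div]; norm_cast
  rw [this]
  unfold profile
  gcongr
  exact sin_pow_six_le_one _

lemma measurable_profile : Measurable profile := by unfold profile; fun_prop

lemma profile_integrableOn_Ioi {c : ℝ} (hc : 0 < c) : IntegrableOn profile (Set.Ioi c) := by
  refine Integrable.mono' (integrableOn_Ioi_rpow_of_lt (a := -3) (by norm_num) hc)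
    measurable_profile.aestronglyMeasurable ?_
  filter_upwards [ae_restrict_mem measurableSet_Ioi] with y hy
  have hy0 : 0 < y := hc.trans hy
  rw [Real.norm_of_nonneg (profile_nonneg hy0.le)]
  exact profile_le hy0

lemma integral_Ioi_cube {c : ℝ} (hc : 0 < c) :
    ∫ y in Set.Ioi c, y ^ (-3 : ℝ) = 1 / (2 * c ^ 2) := by
  rw [integral_Ioi_rpow_of_lt (by norm_num) hc]
  have : (-3 : ℝ) + 1 = -2 := by norm_num
  rw [this, Real.rpow_neg hc.le]
  norm_cast
  field_simp
  norm_num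

lemma profile_tail_le {c : ℝ} (hc : 0 < c) : ∫ y in Set.Ioi c, profile y ≤ 1 / (2 * c ^ 2) := by
  rw [← integral_Ioi_cube hc]
  exact setIntegral_mono_on (profile_integrableOn_Ioi hc)
    (integrableOn_Ioi_rpow_of_lt (by norm_num) hc) measurableSet_Ioi
    fun y hy => profile_le (hc.trans hy)

lemma profile_tail_nonneg {c : ℝ} (hc : 0 < c) : 0 ≤ ∫ y in Set.Ioi c, profile y :=
  setIntegral_nonneg measurableSet_Ioi fun _ hy => profile_nonneg (hc.trans hy).le

lemma profile_integrableOn_Ioc (c : ℝ) : IntegrableOn profile (Set.Ioc 0 c) := by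
  refine Measure.integrableOn_of_bounded (M := 1) (by simp)
    measurable_profile.aestronglyMeasurable ?_
  filter_upwards [ae_restrict_mem measurableSet_Ioc] with y hy
  have hy0 : 0 < y := hy.1
  rw [Real.norm_of_nonneg (profile_nonneg hy0.le)]
  unfold profile
  rw [div_le_one (by positivity)]
  calc Real.sin (y / 2) ^ 6 ≤ (y / 2) ^ 3 := sin_pow_six_le_pow (by positivity) (by norm_num)
    _ ≤ y ^ 3 := by gcongr; linarith

/-- The constant is `16 ∫₀^∞ sin⁶(y/2)/y³ dy`, here with the integral cut at an arbitrary `c > 0`. -/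
lemma C61'one_eq {c : ℝ} (hc : 0 < c) :
    C61'one = 16 * (∫ y in (0 : ℝ)..c, profile y) + 16 * ∫ y in Set.Ioi c, profile y := by
  have split : ∀ c : ℝ, 0 < c →
      (∫ y in (0 : ℝ)..c, profile y) + ∫ y in Set.Ioi c, profile y
        = ∫ y in Set.Ioi 0, profile y := by
    intro c hc
    rw [intervalIntegral.integral_of_le hc.le, ← setIntegral_union
      (Set.Ioc_disjoint_Ioi le_rfl) measurableSet_Ioi (profile_integrableOn_Ioc c)
      (profile_integrableOn_Ioi hc), Set.Ioc_union_Ioi_eq_Ioi hc.le]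
  have hosc : ∫ y in Set.Ioi (1 : ℝ),
      (-15 * Real.cos y + 6 * Real.cos (2 * y) - Real.cos (3 * y)) / y ^ 3
      = 32 * (∫ y in Set.Ioi (1 : ℝ), profile y) - 10 * (1 / 2) := by
    have h3 : (1 : ℝ) / 2 = ∫ y in Set.Ioi (1 : ℝ), y ^ (-3 : ℝ) := by
      rw [integral_Ioi_cube one_pos]; norm_num
    rw [h3, ← integral_const_mul, ← integral_const_mul, ← integral_sub
      ((profile_integrableOn_Ioi one_pos).const_mul 32)
      ((integrableOn_Ioi_rpow_of_lt (by norm_num) one_pos).const_mul 10)]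
    refine setIntegral_congr_fun measurableSet_Ioi fun y hy => ?_
    have hy0 : (0 : ℝ) < y := one_pos.trans hy
    have hp : y ^ (-3 : ℝ) = 1 / y ^ 3 := by
      rw [Real.rpow_neg hy0.le, one_div]; norm_cast
    have hs := sin_six_expand y
    simp only [profile, hp]
    rw [eq_sub_of_add_eq' hs.symm]
    ring
  have h1 := split 1 one_pos
  have h2 := split c hc
  have hC : C61'one = 5 / 2 + 16 * (∫ y in (0 : ℝ)..1, profile y)
    + 1 / 2 * (32 * (∫ y in Set.Ioi (1 : ℝ), profile y) - 10 * (1 / 2)) := by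
    rw [← hosc]; rfl
  rw [hC]
  linarith

/-- The lower bound `t/2 ≤ sin t` on `[0, π/2]` is a weakening of Jordan's inequality. -/
lemma half_le_sin {t : ℝ} (h0 : 0 ≤ t) (h1 : t ≤ Real.pi / 2) : t / 2 ≤ Real.sin t := by
  refine le_trans ?_ (Real.mul_le_sin h0 h1)
  have : (1 : ℝ) / 2 ≤ 2 / Real.pi := by
    rw [div_le_div_iff₀ two_pos Real.pi_pos]
    linarith [Real.pi_le_four]
  nlinarith

lemma sub_cube_le_sin {t : ℝ} (h0 : 0 < t) (h1 : t ≤ Real.pi / 2) : t - t ^ 3 ≤ Real.sin t := by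
  rcases le_or_gt t 1 with h | h
  · have := Real.sin_gt_sub_cube h0
    have h3 : 0 < t ^ 3 := by positivity
    linarith
  · have := half_le_sin h0.le h1
    nlinarith [sq_nonneg (t - 1)]

/-- The kernel `1/sin⁴(x/2)` differs from its leading part `16/x⁴` by at most `256/x²`. -/
lemma kernel_diff {x : ℝ} (h0 : 0 < x) (h1 : x ≤ Real.pi) :
    0 ≤ 1 / Real.sin (x / 2) ^ 4 - 16 / x ^ 4 ∧
      1 / Real.sin (x / 2) ^ 4 - 16 / x ^ 4 ≤ 256 / x ^ 2 := by
  obtain ⟨t, rfl⟩ : ∃ t, x = 2 * t := ⟨x / 2, by ring⟩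
  have ht : 0 < t := by linarith
  have ht1 : t ≤ Real.pi / 2 := by linarith
  have hs1 := half_le_sin ht.le ht1
  have hs2 := sub_cube_le_sin ht ht1
  have hs3 := Real.sin_le ht.le
  rw [mul_div_cancel_left₀ t two_ne_zero]
  set s := Real.sin t
  have hs : 0 < s := by linarith
  have e : 1 / s ^ 4 - 16 / (2 * t) ^ 4 = (t ^ 4 - s ^ 4) / (s ^ 4 * t ^ 4) := by
    field_simp
    ring
  have h4 : s ^ 4 ≤ t ^ 4 := by gcongr
  rw [e]
  refine ⟨div_nonneg (by linarith) (by positivity), ?_⟩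
  have hnum : t ^ 4 - s ^ 4 ≤ 4 * t ^ 6 := by
    have a1 : t ^ 4 - s ^ 4 = (t - s) * (t ^ 3 + t ^ 2 * s + t * s ^ 2 + s ^ 3) := by ring
    have a2 : t ^ 3 + t ^ 2 * s + t * s ^ 2 + s ^ 3 ≤ t ^ 3 + t ^ 2 * t + t * t ^ 2 + t ^ 3 := by
      gcongr
    calc t ^ 4 - s ^ 4 ≤ t ^ 3 * (t ^ 3 + t ^ 2 * t + t * t ^ 2 + t ^ 3) := by
          rw [a1]; exact mul_le_mul (by linarith) a2 (by positivity) (by positivity)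
      _ = 4 * t ^ 6 := by ring
  have hden : (t / 2) ^ 4 * t ^ 4 ≤ s ^ 4 * t ^ 4 := by gcongr
  calc (t ^ 4 - s ^ 4) / (s ^ 4 * t ^ 4) ≤ 4 * t ^ 6 / ((t / 2) ^ 4 * t ^ 4) :=
        div_le_div₀ (by positivity) hnum (by positivity) hden
    _ = 256 / (2 * t) ^ 2 := by field_simp; norm_num

lemma J6_integrand_bound {m : ℕ} {x : ℝ} (h0 : 0 < x) (h1 : x ≤ Real.pi) :
    ‖x * Real.sin (m * x / 2) ^ 6 / Real.sin (x / 2) ^ 4‖ ≤ Real.pi * (2 * m) ^ 4 := by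
  have hs := half_le_sin (t := x / 2) (by linarith) (by linarith)
  have hs0 : 0 < Real.sin (x / 2) := by linarith
  rw [Real.norm_of_nonneg (by positivity)]
  have h6 : Real.sin (m * x / 2) ^ 6 ≤ (m * x / 2) ^ 4 :=
    sin_pow_six_le_pow (by positivity) (by norm_num)
  calc x * Real.sin (m * x / 2) ^ 6 / Real.sin (x / 2) ^ 4
      ≤ Real.pi * (m * x / 2) ^ 4 / (x / 2 / 2) ^ 4 := by gcongr
    _ = Real.pi * (2 * m) ^ 4 := by field_simp

/-- After replacing the kernel by `16/x⁴`, the substitution `y = mx` extracts the factor `m²`. -/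
lemma main_part {m : ℕ} (hm : 0 < m) :
    ∫ x in (0 : ℝ)..Real.pi, 16 * m ^ 3 * profile (m * x)
      = 16 * m ^ 2 * ∫ y in (0 : ℝ)..(m * Real.pi), profile y := by
  have hm' : (m : ℝ) ≠ 0 := by positivity
  rw [intervalIntegral.integral_const_mul,
    intervalIntegral.integral_comp_mul_left (fun y => profile y) hm', mul_zero, smul_eq_mul]
  field_simp

lemma main_part_integrable {m : ℕ} (hm : 0 < m) :
    IntervalIntegrable (fun x => 16 * (m : ℝ) ^ 3 * profile (m * x)) volume 0 Real.pi := by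
  have hm' : (0 : ℝ) < m := by positivity
  refine IntervalIntegrable.const_mul ?_ _
  have h : IntervalIntegrable profile volume 0 (m * Real.pi) :=
    (intervalIntegrable_iff_integrableOn_Ioc_of_le (by positivity)).2
      (profile_integrableOn_Ioc _)
  have := h.comp_mul_left (c := (m : ℝ))
  simpa [hm'.ne'] using this

/-- The integrand is at most `m` on `(0, 1/m]` and at most `1/x` on `[1/m, π]`. -/
lemma integral_sin_six_div_le {m : ℕ} (hm : 0 < m) :
    IntervalIntegrable (fun x => Real.sin (m * x / 2) ^ 6 / x) volume 0 Real.pi ∧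
    ∫ x in (0 : ℝ)..Real.pi, Real.sin (m * x / 2) ^ 6 / x ≤ 1 + Real.log (m * Real.pi) := by
  have hm' : (0 : ℝ) < m := by positivity
  have hm1 : (1 : ℝ) ≤ m := by exact_mod_cast hm
  have hinv : (0 : ℝ) < 1 / m := by positivity
  have hinv' : 1 / (m : ℝ) ≤ Real.pi := by
    rw [div_le_iff₀ hm']
    nlinarith [Real.pi_gt_three]
  have hbd : ∀ x : ℝ, 0 < x → Real.sin (m * x / 2) ^ 6 / x ≤ m := by
    intro x hx
    rw [div_le_iff₀ hx]
    have := sin_pow_six_le_pow (t := m * x / 2) (by positivity) (k := 1) (by norm_num)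
    have : 0 < m * x := by positivity
    linarith
  have hint : ∀ a b : ℝ, 0 ≤ a → a ≤ b →
      IntervalIntegrable (fun x => Real.sin (m * x / 2) ^ 6 / x) volume a b := by
    intro a b ha hab
    rw [intervalIntegrable_iff_integrableOn_Ioc_of_le hab]
    refine Measure.integrableOn_of_bounded (M := m) (by simp)
      (Measurable.aestronglyMeasurable (by fun_prop)) ?_
    filter_upwards [ae_restrict_mem measurableSet_Ioc] with x hx
    have hx0 : 0 < x := ha.trans_lt hx.1
    rw [Real.norm_of_nonneg (by positivity)]
    exact hbd x hx0
  refine ⟨hint _ _ le_rfl Real.pi_pos.le, ?_⟩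
  rw [← intervalIntegral.integral_add_adjacent_intervals (hint 0 (1 / m) le_rfl hinv.le)
    (hint (1 / m) Real.pi hinv.le hinv')]
  have p1 : ∫ x in (0 : ℝ)..(1 / m), Real.sin (m * x / 2) ^ 6 / x ≤ 1 := by
    calc _ ≤ ∫ x in (0 : ℝ)..(1 / m), (m : ℝ) := by
          refine intervalIntegral.integral_mono_on_of_le_Ioo hinv.le (hint _ _ le_rfl hinv.le)
            intervalIntegrable_const fun x hx => hbd x hx.1
      _ = 1 := by simp [hm'.ne']
  have p2 : ∫ x in (1 / m : ℝ)..Real.pi, Real.sin (m * x / 2) ^ 6 / x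
      ≤ Real.log (m * Real.pi) := by
    have hI : ∫ x in (1 / m : ℝ)..Real.pi, 1 / x = Real.log (m * Real.pi) := by
      rw [integral_one_div_of_pos hinv Real.pi_pos]
      congr 1
      field_simp
    rw [← hI]
    refine intervalIntegral.integral_mono_on hinv' (hint _ _ hinv.le hinv') ?_ fun x hx => ?_
    · refine intervalIntegral.intervalIntegrable_one_div (fun x hx => ?_) continuousOn_id
      rw [Set.uIcc_of_le hinv'] at hx
      exact (hinv.trans_le hx.1).ne'
    · have hx0 : 0 < x := hinv.trans_le hx.1
      gcongr
      exact sin_pow_six_le_one _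
  linarith

/-- Replacing the kernel by `16/x⁴` changes `J₆(1,m)` by a nonnegative amount of size `O(log m)`. -/
lemma J6_sub_main {m : ℕ} (hm : 0 < m) :
    0 ≤ J6 1 m - 16 * m ^ 2 * (∫ y in (0 : ℝ)..(m * Real.pi), profile y) ∧
    J6 1 m - 16 * m ^ 2 * (∫ y in (0 : ℝ)..(m * Real.pi), profile y)
      ≤ 256 * (1 + Real.log (m * Real.pi)) := by
  have hm' : (0 : ℝ) < m := by positivity
  have hJ : J6 1 m
      = ∫ x in (0 : ℝ)..Real.pi, x * Real.sin (m * x / 2) ^ 6 / Real.sin (x / 2) ^ 4 := by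
    simp [J6]
  have hf : IntervalIntegrable
      (fun x => x * Real.sin (m * x / 2) ^ 6 / Real.sin (x / 2) ^ 4) volume 0 Real.pi := by
    rw [intervalIntegrable_iff_integrableOn_Ioc_of_le Real.pi_pos.le]
    refine Measure.integrableOn_of_bounded (M := Real.pi * (2 * m) ^ 4) (by simp)
      (Measurable.aestronglyMeasurable (by fun_prop)) ?_
    filter_upwards [ae_restrict_mem measurableSet_Ioc] with x hx
    exact J6_integrand_bound hx.1 hx.2
  have hg := main_part_integrable hm
  obtain ⟨hh, hle⟩ := integral_sin_six_div_le hm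
  rw [hJ, ← main_part hm, ← intervalIntegral.integral_sub hf hg]
  have key : ∀ x : ℝ, 0 < x →
      x * Real.sin (m * x / 2) ^ 6 / Real.sin (x / 2) ^ 4 - 16 * m ^ 3 * profile (m * x)
        = x * Real.sin (m * x / 2) ^ 6 * (1 / Real.sin (x / 2) ^ 4 - 16 / x ^ 4) := by
    intro x hx
    have : 16 * (m : ℝ) ^ 3 * profile (m * x)
        = x * Real.sin (m * x / 2) ^ 6 * (16 / x ^ 4) := by
      unfold profile
      field_simp
    rw [this]
    ring
  constructor
  · rw [intervalIntegral.integral_of_le Real.pi_pos.le]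
    refine setIntegral_nonneg measurableSet_Ioc fun x hx => ?_
    rw [key x hx.1]
    have := (kernel_diff hx.1 hx.2).1
    have hx0 : 0 < x := hx.1
    positivity
  · refine le_trans ?_ (mul_le_mul_of_nonneg_left hle (by norm_num))
    rw [← intervalIntegral.integral_const_mul]
    refine intervalIntegral.integral_mono_on_of_le_Ioo Real.pi_pos.le (hf.sub hg)
      (hh.const_mul 256) fun x hx => ?_
    have hx0 : 0 < x := hx.1
    rw [key x hx0]
    calc _ ≤ x * Real.sin (m * x / 2) ^ 6 * (256 / x ^ 2) := by
          gcongr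
          exact (kernel_diff hx0 hx.2.le).2
      _ = 256 * (Real.sin (m * x / 2) ^ 6 / x) := by field_simp

/-- `J₆(1,m) = C'₆₁(1) m² + O(log m)` as the integer `m → ∞`. -/
theorem stmt_6 :
    (fun m : ℕ => J6 1 m - C61'one * (m : ℝ) ^ 2)
      =O[atTop] fun m : ℕ => Real.log m := by
  refine IsBigO.of_bound 2000 ?_
  filter_upwards [eventually_ge_atTop 3] with m hm
  have hm3 : (3 : ℝ) ≤ m := by exact_mod_cast hm
  have hm' : (0 : ℝ) < m := by linarith
  have hc : 0 < (m : ℝ) * Real.pi := by positivity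
  obtain ⟨h1, h2⟩ := J6_sub_main (m := m) (by omega)
  have hC := C61'one_eq hc
  have t1 := profile_tail_nonneg hc
  have t2 := profile_tail_le hc
  set T := ∫ y in Set.Ioi ((m : ℝ) * Real.pi), profile y
  have t3 : 16 * (m : ℝ) ^ 2 * T ≤ 1 := by
    calc 16 * (m : ℝ) ^ 2 * T ≤ 16 * (m : ℝ) ^ 2 * (1 / (2 * (m * Real.pi) ^ 2)) := by gcongr
      _ = 8 / Real.pi ^ 2 := by field_simp; norm_num
      _ ≤ 1 := by
        rw [div_le_one (by positivity)]
        nlinarith [Real.pi_gt_three]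
  have t4 : 0 ≤ 16 * (m : ℝ) ^ 2 * T := by positivity
  have hlog : 1 ≤ Real.log m := by
    rw [Real.le_log_iff_exp_le hm']
    linarith [Real.exp_one_lt_d9]
  have hpi : Real.log Real.pi ≤ 3 := by
    linarith [Real.log_le_sub_one_of_pos Real.pi_pos, Real.pi_le_four]
  rw [Real.log_mul hm'.ne' Real.pi_pos.ne'] at h2
  have e : J6 1 m - C61'one * (m : ℝ) ^ 2
      = (J6 1 m - 16 * m ^ 2 * (∫ y in (0 : ℝ)..(m * Real.pi), profile y))
        - 16 * (m : ℝ) ^ 2 * T := by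
    rw [hC]; ring
  rw [e, Real.norm_eq_abs, Real.norm_of_nonneg (by linarith : 0 ≤ Real.log m), abs_le]
  constructor <;> linarith
end
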